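/- Let (U,ρ) be a complete metric space, let g ∈ W̃(ℝ,U), and let F ∈ W̃_1(ℝ, (cl U, dist_{ρ'})). Suppose that for every ε > 0 the set T(ε) := P^{(ρ')}_1(ε; g) ∩ P^{(dist_{ρ'})}_1(ε; F) is relatively dense. Then for every δ > 0 and every function h ∈ W_1(ℝ,ℝ) whose frequency module Mod h is dense and countable (for such h, the set T(ε) ∩ P^{(ρ_ℝ)}_1(ε; h) is relatively dense for all ε > 0), there exists a function f_δ ∈ W̃(ℝ,U) such that f_δ(t) ∈ F(t) a.e., ρ(f_δ(t), g(t)) < ρ(g(t), F(t)) + δ a.e. (where ρ(x,A) = inf_{y∈A} ρ(x,y)), and for every ε' > 0 there exists ε > 0 such that P^{(ρ')}_1(ε'; f_δ) ⊇ T(ε) ∩ P^{(ρ_ℝ)}_1(ε; h). -/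

import Mathlib

open MeasureTheory Filter Topology TopologicalSpace
open scoped ENNReal Pointwise

noncomputable section

/-- The truncated ("bounded") distance `ρ'(x,y) = min {1, ρ(x,y)}` on a metric space. -/
def bdist {α : Type*} [PseudoMetricSpace α] : α → α → ℝ := fun x y => min 1 (dist x y)

/-- The Hausdorff distance `dist_{ρ'}` (corresponding to the truncated metric `ρ'`)
between non-empty closed subsets of a metric space. -/
def clDist {α : Type*} [MetricSpace α] : Closeds α → Closeds α → ℝ :=
  fun A B => (min 1 (EMetric.hausdorffEdist (A : Set α) (B : Set α))).toReal

/-- The Hausdorff distance `dist_ρ` between (non-empty closed bounded) subsets. -/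
def clbDist {α : Type*} [MetricSpace α] : Closeds α → Closeds α → ℝ :=
  fun A B => Metric.hausdorffDist (A : Set α) (B : Set α)

/-- `D^{(d)}_{p,l}(f,g) = ( sup_ξ (1/l) ∫_ξ^{ξ+l} d(f t, g t)^p dt )^{1/p}`,
valued in `ℝ≥0∞`. -/
def weylD {α : Type*} (d : α → α → ℝ) (p l : ℝ) (f g : ℝ → α) : ℝ≥0∞ :=
  (⨆ ξ : ℝ, ENNReal.ofReal (1 / l) *
      ∫⁻ t in Set.Icc ξ (ξ + l), ENNReal.ofReal (d (f t) (g t) ^ p)) ^ (1 / p)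

/-- The Weyl semimetric `D^{(d)}_p(f,g) = lim_{l → +∞} D^{(d)}_{p,l}(f,g)`
(the limit exists; it is formalized here as a `limsup`). -/
def weylDinf {α : Type*} (d : α → α → ℝ) (p : ℝ) (f g : ℝ → α) : ℝ≥0∞ :=
  Filter.limsup (fun l => weylD d p l f g) Filter.atTop

/-- Membership in `M_p(ℝ, α)`: `f` is (strongly) measurable and
`sup_ξ ∫_ξ^{ξ+1} d(f t, x₀)^p dt < +∞`. -/
def MemMp {α : Type*} [TopologicalSpace α] (d : α → α → ℝ) (p : ℝ) (x₀ : α)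
    (f : ℝ → α) : Prop :=
  AEStronglyMeasurable f MeasureTheory.volume ∧
  ∃ C : ℝ, ∀ ξ : ℝ,
    (∫⁻ t in Set.Icc ξ (ξ + 1), ENNReal.ofReal (d (f t) x₀ ^ p)) ≤ ENNReal.ofReal C

/-- A set `T ⊆ ℝ` is relatively dense. -/
def RelDense (T : Set ℝ) : Prop := ∃ a > 0, ∀ ξ : ℝ, (Set.Icc ξ (ξ + a) ∩ T).Nonempty

/-- The set of `(ε, D^{(d)}_{p,l})`-almost periods of `f`. -/
def APeriodsL {α : Type*} (d : α → α → ℝ) (p l ε : ℝ) (f : ℝ → α) : Set ℝ :=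
  {τ | weylD d p l f (fun t => f (t + τ)) < ENNReal.ofReal ε}

/-- The set `P^{(d)}_p(ε; f)` of `(ε, D^{(d)}_p)`-almost periods of `f`. -/
def APeriods {α : Type*} (d : α → α → ℝ) (p ε : ℝ) (f : ℝ → α) : Set ℝ :=
  {τ | weylDinf d p f (fun t => f (t + τ)) < ENNReal.ofReal ε}

/-- Membership in the space `W_p(ℝ, α)` of Weyl almost periodic functions of order `p`
w.r.t. the distance `d` (with distinguished point `x₀`). -/
def MemWp {α : Type*} [TopologicalSpace α] (d : α → α → ℝ) (p : ℝ) (x₀ : α)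
    (f : ℝ → α) : Prop :=
  MemMp d p x₀ f ∧ ∀ ε > 0, ∃ l > 0, RelDense (APeriodsL d p l ε f)

/-- The module `Mod f`: the additive group of all `λ ∈ ℝ` such that `e^{iλτ_j} → 1`
for every `f`-returning sequence `{τ_j}` (a sequence with `D^{(d)}_1(f, f(·+τ_j)) → 0`,
where `d` is the relevant bounded distance). -/
def WMod {α : Type*} (d : α → α → ℝ) (f : ℝ → α) : Set ℝ :=
  {lam : ℝ | ∀ τ : ℕ → ℝ,
    Tendsto (fun j => weylDinf d 1 f (fun t => f (t + τ j))) atTop (nhds 0) →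
    Tendsto (fun j => Complex.exp (Complex.I * ((lam * τ j : ℝ) : ℂ))) atTop (nhds 1)}

/-- `κ_W(T) = lim_{l → +∞} sup_ξ (1/l) meas([ξ, ξ+l] ∩ T)` (formalized as a `limsup`). -/
def kappaW (T : Set ℝ) : ℝ≥0∞ :=
  Filter.limsup (fun l : ℝ => ⨆ ξ : ℝ,
    ENNReal.ofReal (1 / l) * MeasureTheory.volume (Set.Icc ξ (ξ + l) ∩ T)) Filter.atTop

/-- Membership in `M*_p(ℝ, α)`. -/
def MemMpStar {α : Type*} [TopologicalSpace α] (d : α → α → ℝ) (p : ℝ) (x₀ : α)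
    (f : ℝ → α) : Prop :=
  MemMp d p x₀ f ∧
  ∀ ε > 0, ∃ δ > 0, ∀ T : Set ℝ, MeasurableSet T → kappaW T < ENNReal.ofReal δ →
    Filter.limsup (fun l : ℝ => ⨆ ξ : ℝ, ENNReal.ofReal (1 / l) *
        ∫⁻ t in Set.Icc ξ (ξ + l) ∩ T, ENNReal.ofReal (d (f t) x₀ ^ p)) Filter.atTop
      < ENNReal.ofReal ε

/-- Distance from a point to a set w.r.t. the distance `d`, valued in `ℝ≥0∞`
(`∞` for the empty set). -/
def dInfDist {α : Type*} (d : α → α → ℝ) (x : α) (K : Set α) : ℝ≥0∞ :=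
  ⨅ y ∈ K, ENNReal.ofReal (d x y)

/-- Membership in `W̃_p(ℝ, α)`: conditions 1) (relatively dense sets of
`(ε, D^{(d)}_p)`-almost periods) and 2) (approximate compactness of values). -/
def MemWpTilde {α : Type*} [TopologicalSpace α] (d : α → α → ℝ) (p : ℝ) (x₀ : α)
    (f : ℝ → α) : Prop :=
  MemMp d p x₀ f ∧
  (∀ ε > 0, RelDense (APeriods d p ε f)) ∧
  (∀ ε > 0, ∀ δ > 0, ∃ K : Set α, IsCompact K ∧
      kappaW {t | ENNReal.ofReal ε ≤ dInfDist d (f t) K} < ENNReal.ofReal δ)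

/-- The support of a Borel measure on a topological space. -/
def measSupport {α : Type*} [TopologicalSpace α] [MeasurableSpace α]
    (μ : Measure α) : Set α :=
  {x | ∀ V : Set α, IsOpen V → x ∈ V → 0 < μ V}

/-- `r_δ(x, μ) = inf { r > 0 : μ[U_r(x)] > δ }`. -/
def rdelta {α : Type*} [PseudoMetricSpace α] [MeasurableSpace α]
    (x : α) (μ : Measure α) (δ : ℝ) : ℝ :=
  sInf {r : ℝ | 0 < r ∧ ENNReal.ofReal δ < μ (Metric.ball x r)}

/-- The Lévy–Prokhorov distance on Borel probability measures. -/
def lpDist {α : Type*} [MeasurableSpace α] [PseudoEMetricSpace α] :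
    ProbabilityMeasure α → ProbabilityMeasure α → ℝ :=
  fun μ ν => MeasureTheory.levyProkhorovDist (μ : Measure α) (ν : Measure α)

end

/-!
The values of `F` and `g` are approximated by functions with countably many values, and on each
piece of constancy a selection is easy to write down; the point is to choose the pieces so that
they return under the common almost periods of `g`, `F` and `h`.

A piece is cut out by a condition `φ t < 0` with `φ` a real function of `g` and `F`. The cut sets
`{φ < 0}` return along the almost periods as soon as `{|φ| < c}` has small upper density for small
`c`, and this can fail because `φ` may have mass near `0`. The frequencies of `h` supply the
remedy. For a small frequency `ω`, adding a small multiple of the triangle wave `‖ω t‖` spreads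
the values of `φ` out: since `φ` has relatively dense almost periods, translating a set `{|φ| < c}`
by almost periods at which the wave takes well separated values produces almost disjoint copies,
so its density is small. By Baire's theorem a generic small combination of such waves works
for all scales `c` at once. Hence the index of the first member of a countable net close to
`(F t, g t)` is almost periodic after a small perturbation of the distances.

The resulting approximations `vₙ` with countably many values feed a successive selection: starting
from the value of `g`, each point is moved to a nearby point of the `n`-th approximation of `F t`.
The moves decrease geometrically, so the limit exists, lies in `F t` and is almost periodic along
the same translations.
-/

section WeylDensity

theorem limsup_ennreal_add_le {ι : Type*} {l : Filter ι} (u v : ι → ℝ≥0∞) :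
    limsup (fun i => u i + v i) l ≤ limsup u l + limsup v l := by
  refine ENNReal.le_of_forall_pos_le_add fun ε hε htop => limsup_le_of_le (by isBoundedDefault) ?_
  have hε₂ : (ε / 2 : ℝ≥0∞) ≠ 0 := by simp [hε.ne']
  filter_upwards [eventually_lt_of_limsup_lt
      (ENNReal.lt_add_right (le_self_add.trans_lt htop).ne hε₂),
    eventually_lt_of_limsup_lt (ENNReal.lt_add_right (le_add_self.trans_lt htop).ne hε₂)]
    with i hu hv
  calc u i + v i ≤ (limsup u l + ε / 2) + (limsup v l + ε / 2) := add_le_add hu.le hv.le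
    _ = limsup u l + limsup v l + ε := by rw [add_add_add_comm, ENNReal.add_halves]

/-- The upper Weyl density of a measure on the line: its largest asymptotic mean mass per unit of
length, over long intervals placed anywhere. Both `kappaW` and `weylDinf` (with exponent `1`) are
values of it. -/
noncomputable def weylDensity (μ : Measure ℝ) : ℝ≥0∞ :=
  limsup (fun l : ℝ => ⨆ ξ : ℝ, ENNReal.ofReal (1 / l) * μ (Set.Icc ξ (ξ + l))) atTop

theorem kappaW_eq_weylDensity (S : Set ℝ) : kappaW S = weylDensity (volume.restrict S) := by
  simp only [kappaW, weylDensity, Measure.restrict_apply measurableSet_Icc]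

theorem weylDinf_one_eq_weylDensity {α : Type*} (d : α → α → ℝ) (f g : ℝ → α) :
    weylDinf d 1 f g
      = weylDensity (volume.withDensity fun t => ENNReal.ofReal (d (f t) (g t))) := by
  simp only [weylDinf, weylD, weylDensity, withDensity_apply _ measurableSet_Icc, Real.rpow_one,
    one_div_one, ENNReal.rpow_one]

theorem weylDensity_add_le (μ ν : Measure ℝ) :
    weylDensity (μ + ν) ≤ weylDensity μ + weylDensity ν := by
  refine (limsup_le_limsup (Eventually.of_forall fun l => ?_)).trans (limsup_ennreal_add_le _ _)
  refine iSup_le fun ξ => ?_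
  rw [Measure.add_apply, mul_add]
  exact add_le_add (le_iSup (fun ξ => ENNReal.ofReal (1 / l) * μ (Set.Icc ξ (ξ + l))) ξ)
    (le_iSup (fun ξ => ENNReal.ofReal (1 / l) * ν (Set.Icc ξ (ξ + l))) ξ)

theorem weylDensity_le_of_le_add_const {μ ν : Measure ℝ} {C : ℝ≥0∞} (hC : C ≠ ∞)
    (h : ∀ ξ l, 0 ≤ l → μ (Set.Icc ξ (ξ + l)) ≤ ν (Set.Icc ξ (ξ + l)) + C) :
    weylDensity μ ≤ weylDensity ν := by
  have hC₀ : limsup (fun l : ℝ => ENNReal.ofReal (1 / l) * C) atTop = 0 := by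
    have hinv : Tendsto (fun l : ℝ => ENNReal.ofReal (1 / l)) atTop (𝓝 0) := by
      simpa using ENNReal.tendsto_ofReal tendsto_inv_atTop_zero
    simpa using (ENNReal.Tendsto.mul_const hinv (.inr hC)).limsup_eq
  calc weylDensity μ
      ≤ limsup (fun l : ℝ => (⨆ ξ, ENNReal.ofReal (1 / l) * ν (Set.Icc ξ (ξ + l)))
          + ENNReal.ofReal (1 / l) * C) atTop := by
        refine limsup_le_limsup ?_
        filter_upwards [eventually_ge_atTop 0] with l hl
        refine iSup_le fun ξ => (mul_le_mul_right (h ξ l hl) _).trans ?_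
        rw [mul_add]
        gcongr
        exact le_iSup (fun ξ => ENNReal.ofReal (1 / l) * ν (Set.Icc ξ (ξ + l))) ξ
    _ ≤ weylDensity ν := (limsup_ennreal_add_le _ _).trans_eq (by rw [hC₀, add_zero, weylDensity])

theorem weylDensity_mono {μ ν : Measure ℝ} (h : μ ≤ ν) : weylDensity μ ≤ weylDensity ν :=
  weylDensity_le_of_le_add_const ENNReal.zero_ne_top fun _ _ _ => by simpa using h _

theorem weylDensity_smul {a : ℝ≥0∞} (ha : a ≠ ∞) (μ : Measure ℝ) :
    weylDensity (a • μ) = a * weylDensity μ := by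
  simp only [weylDensity, Measure.smul_apply, smul_eq_mul, mul_left_comm _ a, ← ENNReal.mul_iSup,
    ENNReal.limsup_const_mul_of_ne_top ha]

theorem weylDensity_volume : weylDensity volume = 1 := by
  refine (tendsto_const_nhds.congr' ?_).limsup_eq
  filter_upwards [eventually_gt_atTop 0] with l hl
  simp only [Real.volume_Icc, add_sub_cancel_left, iSup_const]
  rw [← ENNReal.ofReal_mul (by positivity), one_div_mul_cancel hl.ne', ENNReal.ofReal_one]

theorem kappaW_mono_ae {A B : Set ℝ} (h : A ≤ᵐ[volume] B) : kappaW A ≤ kappaW B := by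
  simpa only [kappaW_eq_weylDensity] using weylDensity_mono (Measure.restrict_mono_ae h)

theorem kappaW_mono {A B : Set ℝ} (h : A ⊆ B) : kappaW A ≤ kappaW B :=
  kappaW_mono_ae h.eventuallyLE

theorem kappaW_empty : kappaW ∅ = 0 := by
  simpa [kappaW_eq_weylDensity] using weylDensity_smul ENNReal.zero_ne_top volume

theorem kappaW_union_le (A B : Set ℝ) : kappaW (A ∪ B) ≤ kappaW A + kappaW B := by
  simp only [kappaW_eq_weylDensity]
  exact (weylDensity_mono (Measure.restrict_union_le A B)).trans (weylDensity_add_le _ _)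

theorem kappaW_le_add {A B C : Set ℝ} (h : A ⊆ B ∪ C) : kappaW A ≤ kappaW B + kappaW C :=
  (kappaW_mono h).trans (kappaW_union_le B C)

theorem kappaW_biUnion_le {ι : Type*} (s : Finset ι) (A : ι → Set ℝ) :
    kappaW (⋃ i ∈ s, A i) ≤ ∑ i ∈ s, kappaW (A i) := by
  classical
  induction s using Finset.induction_on with
  | empty => simp [kappaW_empty]
  | insert i s hi ih =>
    rw [Finset.sum_insert hi, Finset.set_biUnion_insert]
    exact (kappaW_union_le _ _).trans (add_le_add le_rfl ih)

theorem volume_inter_Icc_le_translate (B : Set ℝ) (τ ξ l : ℝ) :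
    volume (Set.Icc ξ (ξ + l) ∩ B)
      ≤ volume (Set.Icc ξ (ξ + l) ∩ (· + τ) ⁻¹' B) + 2 * ENNReal.ofReal |τ| := by
  have hcover : (· + τ) ⁻¹' (Set.Icc ξ (ξ + l) ∩ B) ⊆ (Set.Icc ξ (ξ + l) ∩ (· + τ) ⁻¹' B) ∪
      (Set.Icc (ξ - |τ|) ξ ∪ Set.Icc (ξ + l) (ξ + l + |τ|)) := by
    rintro t ⟨⟨hl, hr⟩, hB⟩
    have := abs_le.1 (le_refl |τ|)
    by_cases h₁ : ξ ≤ t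
    · by_cases h₂ : t ≤ ξ + l
      · exact .inl ⟨⟨h₁, h₂⟩, hB⟩
      · exact .inr (.inr ⟨(not_le.1 h₂).le, by linarith⟩)
    · exact .inr (.inl ⟨by linarith, (not_le.1 h₁).le⟩)
  calc volume (Set.Icc ξ (ξ + l) ∩ B)
      = volume ((· + τ) ⁻¹' (Set.Icc ξ (ξ + l) ∩ B)) :=
        (measure_preimage_add_right volume τ _).symm
    _ ≤ _ := (measure_mono hcover).trans ((measure_union_le _ _).trans
        (add_le_add le_rfl (measure_union_le _ _)))
    _ = _ := by simp [two_mul]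

theorem kappaW_preimage_add_le (B : Set ℝ) (τ : ℝ) : kappaW ((· + τ) ⁻¹' B) ≤ kappaW B := by
  rw [kappaW_eq_weylDensity, kappaW_eq_weylDensity]
  refine weylDensity_le_of_le_add_const (C := 2 * ENNReal.ofReal |-τ|)
    (by finiteness) fun ξ l _ => ?_
  rw [Measure.restrict_apply measurableSet_Icc, Measure.restrict_apply measurableSet_Icc]
  simpa [Set.preimage_preimage] using volume_inter_Icc_le_translate ((· + τ) ⁻¹' B) (-τ) ξ l

theorem sum_restrict_le_add_smul_restrict {α ι : Type*} [MeasurableSpace α] [Fintype ι]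
    (μ : Measure α) {S : ι → Set α} {E : Set α} (hS : ∀ i, MeasurableSet (S i))
    (hE : MeasurableSet E) (hdisj : Pairwise fun i j => S i ∩ S j ⊆ E) :
    ∑ i, μ.restrict (S i) ≤ μ + (Fintype.card ι : ℝ≥0∞) • μ.restrict E := by
  have hsplit (i) : μ.restrict (S i) ≤ μ.restrict (S i \ E) + μ.restrict E :=
    (Measure.restrict_mono (by simp) le_rfl).trans (Measure.restrict_union_le _ _)
  have hpacked : ∑ i, μ.restrict (S i \ E) ≤ μ := by
    rw [← Measure.sum_fintype, ← Measure.restrict_iUnion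
      (fun i j hij => Set.disjoint_left.2 fun t hi hj => hi.2 (hdisj hij ⟨hi.1, hj.1⟩))
      fun i => (hS i).diff hE]
    exact Measure.restrict_le_self
  calc ∑ i, μ.restrict (S i)
      ≤ ∑ i, (μ.restrict (S i \ E) + μ.restrict E) := Finset.sum_le_sum fun i _ => hsplit i
    _ ≤ _ := by
      rw [Finset.sum_add_distrib, Finset.sum_const, Finset.card_univ, Nat.cast_smul_eq_nsmul]
      exact add_le_add hpacked le_rfl

theorem kappaW_packing {ι : Type*} [Fintype ι] [Nonempty ι] {B E : Set ℝ} (hB : MeasurableSet B)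
    (hE : MeasurableSet E) (τ : ι → ℝ)
    (hdisj : Pairwise fun i j => (· + τ i) ⁻¹' B ∩ (· + τ j) ⁻¹' B ⊆ E) :
    kappaW B ≤ (Fintype.card ι : ℝ≥0∞)⁻¹ + kappaW E := by
  set N := (Fintype.card ι : ℝ≥0∞)
  have hN : N ≠ ∞ := ENNReal.natCast_ne_top _
  have hN₀ : N ≠ 0 := Nat.cast_ne_zero.2 Fintype.card_ne_zero
  have hmass : N * kappaW B ≤ 1 + N * kappaW E := by
    simp only [kappaW_eq_weylDensity, ← weylDensity_smul hN]
    rw [← weylDensity_volume]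
    refine le_trans ?_ (weylDensity_add_le _ _)
    refine weylDensity_le_of_le_add_const (C := ∑ i, 2 * ENNReal.ofReal |τ i|)
      (ENNReal.sum_ne_top.2 fun _ _ => by finiteness) fun ξ l _ => ?_
    calc (N • volume.restrict B) (Set.Icc ξ (ξ + l))
        = ∑ _i : ι, volume (Set.Icc ξ (ξ + l) ∩ B) := by
          simp [N, Measure.restrict_apply measurableSet_Icc]
      _ ≤ ∑ i, (volume.restrict ((· + τ i) ⁻¹' B) (Set.Icc ξ (ξ + l))
            + 2 * ENNReal.ofReal |τ i|) := by
          refine Finset.sum_le_sum fun _ _ => ?_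
          rw [Measure.restrict_apply measurableSet_Icc]
          exact volume_inter_Icc_le_translate B (τ _) ξ l
      _ = (∑ i, volume.restrict ((· + τ i) ⁻¹' B)) (Set.Icc ξ (ξ + l))
            + ∑ i, 2 * ENNReal.ofReal |τ i| := by
          rw [Finset.sum_add_distrib, Measure.finsetSum_apply]
      _ ≤ _ := add_le_add (sum_restrict_le_add_smul_restrict volume
          (fun i => measurable_id.add_const (τ i) hB) hE hdisj _) le_rfl
  rw [← ENNReal.mul_le_mul_iff_right hN₀ hN, mul_add, ENNReal.mul_inv_cancel hN₀ hN]
  exact hmass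

end WeylDensity

section ReturnsAlong

variable {X Y : Type*} [PseudoEMetricSpace X] [PseudoEMetricSpace Y] {𝓕 𝓖 : Filter ℝ}

/-- The translates of `u` by `τ` return to `u` in Weyl measure as `τ` runs along the filter `𝓕`. -/
def ReturnsAlong (𝓕 : Filter ℝ) (u : ℝ → X) : Prop :=
  ∀ ε, 0 < ε → Tendsto (fun τ => kappaW {t | ε ≤ edist (u (t + τ)) (u t)}) 𝓕 (𝓝 0)

namespace ReturnsAlong

theorem of_tendsto_zero_le {u : ℝ → X}
    (h : ∀ ε, 0 < ε → ∃ b : ℝ → ℝ≥0∞, Tendsto b 𝓕 (𝓝 0) ∧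
      ∀ᶠ τ in 𝓕, kappaW {t | ε ≤ edist (u (t + τ)) (u t)} ≤ b τ) : ReturnsAlong 𝓕 u := by
  intro ε hε
  obtain ⟨b, hb, hle⟩ := h ε hε
  exact tendsto_of_tendsto_of_tendsto_of_le_of_le' tendsto_const_nhds hb
    (Eventually.of_forall fun _ => zero_le) hle

theorem const (x : X) : ReturnsAlong 𝓕 fun _ => x := fun ε hε => by
  simpa [hε.not_ge, kappaW_empty] using tendsto_const_nhds

theorem addMonoidHom {G : Type*} [SeminormedAddCommGroup G] {θ : ℝ →+ G}
    (h : Tendsto θ 𝓕 (𝓝 0)) : ReturnsAlong 𝓕 θ := fun ε hε => by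
  refine tendsto_const_nhds.congr' ?_
  filter_upwards [h.eventually (Metric.eball_mem_nhds 0 hε)] with τ hτ
  have hdist (t : ℝ) : edist (θ (t + τ)) (θ t) = edist (θ τ) 0 := by
    simpa using edist_add_left (θ t) (θ τ) 0
  simp only [hdist, (show edist (θ τ) 0 < ε from hτ).not_ge, Set.ofPred_false, kappaW_empty]

theorem of_ae_approx {u : ℝ → X}
    (h : ∀ ε, 0 < ε → ∃ v : ℝ → X, ReturnsAlong 𝓕 v ∧ ∀ᵐ t, edist (v t) (u t) < ε) :
    ReturnsAlong 𝓕 u := by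
  refine of_tendsto_zero_le fun ε hε => ?_
  have hε₃ : 0 < ε / 3 := ENNReal.div_pos hε.ne' (by finiteness)
  obtain ⟨v, hv, hvu⟩ := h (ε / 3) hε₃
  refine ⟨_, hv _ hε₃, Eventually.of_forall fun τ => kappaW_mono_ae ?_⟩
  filter_upwards [hvu, (quasiMeasurePreserving_add_right volume τ).ae hvu] with t ht htτ
  refine fun hle => le_of_not_gt fun hlt => (le_refl ε).not_gt ?_
  calc ε ≤ edist (u (t + τ)) (u t) := hle
    _ ≤ edist (u (t + τ)) (v (t + τ)) + edist (v (t + τ)) (v t) + edist (v t) (u t) :=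
      edist_triangle4 _ _ _ _
    _ < ε / 3 + ε / 3 + ε / 3 :=
      ENNReal.add_lt_add (ENNReal.add_lt_add (edist_comm (u _) _ ▸ htτ) hlt) ht
    _ = ε := ENNReal.add_thirds ε

theorem comp_uniformContinuous {u : ℝ → X} (hu : ReturnsAlong 𝓕 u) {φ : X → Y}
    (hφ : UniformContinuous φ) : ReturnsAlong 𝓕 fun t => φ (u t) := by
  refine of_tendsto_zero_le fun ε hε => ?_
  obtain ⟨δ, hδ, h⟩ := EMetric.uniformContinuous_iff.1 hφ ε hε
  exact ⟨_, hu δ hδ, Eventually.of_forall fun τ => kappaW_mono fun t ht =>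
    le_of_not_gt fun hlt => (h hlt).not_ge ht⟩

theorem prodMk {u : ℝ → X} {v : ℝ → Y} (hu : ReturnsAlong 𝓕 u) (hv : ReturnsAlong 𝓕 v) :
    ReturnsAlong 𝓕 fun t => (u t, v t) := by
  refine of_tendsto_zero_le fun ε hε => ⟨_, by simpa using (hu ε hε).add (hv ε hε),
    Eventually.of_forall fun τ => kappaW_le_add fun t ht => ?_⟩
  simpa [Prod.edist_eq] using ht

theorem add {E : Type*} [SeminormedAddCommGroup E] {u v : ℝ → E} (hu : ReturnsAlong 𝓕 u)
    (hv : ReturnsAlong 𝓕 v) : ReturnsAlong 𝓕 fun t => u t + v t :=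
  (hu.prodMk hv).comp_uniformContinuous (φ := fun p : E × E => p.1 + p.2) uniformContinuous_add

theorem filter_sub {u : ℝ → X} (h : ReturnsAlong 𝓕 u) (h' : ReturnsAlong 𝓖 u) :
    ReturnsAlong (𝓕 - 𝓖) u := by
  intro ε hε
  rw [ENNReal.tendsto_nhds_zero]
  intro η hη
  have hε₂ : 0 < ε / 2 := ENNReal.half_pos hε.ne'
  have hη₂ : 0 < η / 2 := ENNReal.half_pos hη.ne'
  filter_upwards [sub_mem_sub (ENNReal.tendsto_nhds_zero.1 (h _ hε₂) _ hη₂)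
    (ENNReal.tendsto_nhds_zero.1 (h' _ hε₂) _ hη₂)]
  rintro _ ⟨τ, hτ, σ, hσ, rfl⟩
  set A := {t | ε ≤ edist (u (t + (τ - σ))) (u t)}
  have hsub : (· + σ) ⁻¹' A ⊆ {t | ε / 2 ≤ edist (u (t + τ)) (u t)} ∪
      {t | ε / 2 ≤ edist (u (t + σ)) (u t)} := by
    intro t ht
    by_contra hnot
    simp only [Set.mem_union, Set.mem_ofPred_eq, not_or, not_le] at hnot
    refine (show ε ≤ edist (u (t + σ + (τ - σ))) (u (t + σ)) from ht).not_gt ?_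
    calc edist (u (t + σ + (τ - σ))) (u (t + σ))
        ≤ edist (u (t + τ)) (u t) + edist (u (t + σ)) (u t) := by
          rw [add_assoc, add_sub_cancel, edist_comm (u (t + σ))]
          exact edist_triangle _ _ _
      _ < ε := ENNReal.add_halves ε ▸ ENNReal.add_lt_add hnot.1 hnot.2
  calc kappaW A = kappaW ((· + -σ) ⁻¹' ((· + σ) ⁻¹' A)) := by simp [Set.preimage_preimage]
    _ ≤ kappaW ((· + σ) ⁻¹' A) := kappaW_preimage_add_le _ _
    _ ≤ η / 2 + η / 2 := (kappaW_le_add hsub).trans (add_le_add hτ hσ)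
    _ = η := ENNReal.add_halves η

end ReturnsAlong

end ReturnsAlong

section WeylAPAlong

variable {X Y Z : Type*} [PseudoEMetricSpace X] [PseudoEMetricSpace Y] [PseudoEMetricSpace Z]
  {𝓕 : Filter ℝ}

/-- Up to small Weyl density, the values of `u` are covered by finitely many small balls. -/
def WeylTotallyBounded (u : ℝ → X) : Prop :=
  ∀ ε, 0 < ε → ∀ η, 0 < η → ∃ s : Set X, s.Finite ∧ kappaW {t | ∀ x ∈ s, ε ≤ edist (u t) x} ≤ η

/-- Weyl almost periodicity in measure relative to the filter `𝓕` of translations: the form in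
which membership in `W̃` is inherited by the functions constructed from `F` and `g`. -/
structure WeylAPAlong (𝓕 : Filter ℝ) (u : ℝ → X) : Prop where
  aestronglyMeasurable : AEStronglyMeasurable u volume
  returnsAlong : ReturnsAlong 𝓕 u
  weylTotallyBounded : WeylTotallyBounded u

theorem WeylTotallyBounded.of_ae_approx {u : ℝ → X}
    (h : ∀ ε, 0 < ε → ∃ v : ℝ → X, WeylTotallyBounded v ∧ ∀ᵐ t, edist (v t) (u t) < ε) :
    WeylTotallyBounded u := by
  intro ε hε η hη
  have hε₂ : 0 < ε / 2 := ENNReal.half_pos hε.ne'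
  obtain ⟨v, hv, hvu⟩ := h (ε / 2) hε₂
  obtain ⟨s, hs, hκ⟩ := hv _ hε₂ η hη
  refine ⟨s, hs, (kappaW_mono_ae ?_).trans hκ⟩
  filter_upwards [hvu] with t ht hfar x hx
  refine le_of_not_gt fun hlt => (hfar x hx).not_gt ?_
  calc edist (u t) x ≤ edist (u t) (v t) + edist (v t) x := edist_triangle _ _ _
    _ < ε / 2 + ε / 2 := ENNReal.add_lt_add (edist_comm (u t) _ ▸ ht) hlt
    _ = ε := ENNReal.add_halves ε

theorem WeylTotallyBounded.comp_uniformContinuous {u : ℝ → X} (hu : WeylTotallyBounded u)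
    {φ : X → Y} (hφ : UniformContinuous φ) : WeylTotallyBounded fun t => φ (u t) := by
  intro ε hε η hη
  obtain ⟨δ, hδ, h⟩ := EMetric.uniformContinuous_iff.1 hφ ε hε
  obtain ⟨s, hs, hκ⟩ := hu δ hδ η hη
  refine ⟨φ '' s, hs.image φ, (kappaW_mono ?_).trans hκ⟩
  exact fun t ht x hx =>
    le_of_not_gt fun hlt => (h hlt).not_ge (ht _ (Set.mem_image_of_mem φ hx))

theorem WeylTotallyBounded.prodMk {u : ℝ → X} {v : ℝ → Y} (hu : WeylTotallyBounded u)
    (hv : WeylTotallyBounded v) : WeylTotallyBounded fun t => (u t, v t) := by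
  intro ε hε η hη
  obtain ⟨s, hs, hκs⟩ := hu ε hε _ (ENNReal.half_pos hη.ne')
  obtain ⟨s', hs', hκs'⟩ := hv ε hε _ (ENNReal.half_pos hη.ne')
  refine ⟨s ×ˢ s', hs.prod hs', ?_⟩
  rw [← ENNReal.add_halves η]
  refine (kappaW_le_add fun t ht => ?_).trans (add_le_add hκs hκs')
  by_contra hnot
  simp only [Set.mem_union, Set.mem_ofPred_eq, not_or, not_forall, not_le] at hnot
  obtain ⟨⟨x, hx, hux⟩, y, hy, hvy⟩ := hnot
  exact (max_lt hux hvy).not_ge (ht (x, y) ⟨hx, hy⟩)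

namespace WeylAPAlong

theorem of_ae_approx {u : ℝ → X}
    (h : ∀ ε, 0 < ε → ∃ v : ℝ → X, WeylAPAlong 𝓕 v ∧ ∀ᵐ t, edist (v t) (u t) < ε) :
    WeylAPAlong 𝓕 u where
  aestronglyMeasurable := by
    choose v hv hvu using fun n : ℕ => h (n : ℝ≥0∞)⁻¹ (ENNReal.inv_pos.2 (by finiteness))
    refine aestronglyMeasurable_of_tendsto_ae atTop (fun n => (hv n).aestronglyMeasurable) ?_
    filter_upwards [ae_all_iff.2 hvu] with t ht
    exact tendsto_iff_edist_tendsto_0.2 (tendsto_of_tendsto_of_tendsto_of_le_of_le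
      tendsto_const_nhds ENNReal.tendsto_inv_nat_nhds_zero (fun _ => zero_le)
      fun n => (ht n).le)
  returnsAlong := .of_ae_approx fun ε hε => (h ε hε).imp fun _ hv => ⟨hv.1.returnsAlong, hv.2⟩
  weylTotallyBounded := .of_ae_approx fun ε hε =>
    (h ε hε).imp fun _ hv => ⟨hv.1.weylTotallyBounded, hv.2⟩

theorem comp_uniformContinuous {u : ℝ → X} (hu : WeylAPAlong 𝓕 u) {φ : X → Y}
    (hφ : UniformContinuous φ) : WeylAPAlong 𝓕 fun t => φ (u t) where
  aestronglyMeasurable := hφ.continuous.comp_aestronglyMeasurable hu.aestronglyMeasurable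
  returnsAlong := hu.returnsAlong.comp_uniformContinuous hφ
  weylTotallyBounded := hu.weylTotallyBounded.comp_uniformContinuous hφ

theorem prodMk {u : ℝ → X} {v : ℝ → Y} (hu : WeylAPAlong 𝓕 u) (hv : WeylAPAlong 𝓕 v) :
    WeylAPAlong 𝓕 fun t => (u t, v t) where
  aestronglyMeasurable := hu.aestronglyMeasurable.prodMk hv.aestronglyMeasurable
  returnsAlong := hu.returnsAlong.prodMk hv.returnsAlong
  weylTotallyBounded := hu.weylTotallyBounded.prodMk hv.weylTotallyBounded

end WeylAPAlong

/-- A countably-valued function read off an almost periodic index. Arbitrary maps may be applied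
to such functions without losing almost periodicity, since every map on the discrete space `ℕ` is
uniformly continuous. -/
def ElementaryAP {α : Type*} (𝓕 : Filter ℝ) (u : ℝ → α) : Prop :=
  ∃ (c : ℝ → ℕ) (H : ℕ → α), WeylAPAlong 𝓕 c ∧ u = H ∘ c

namespace ElementaryAP

theorem weylAPAlong {u : ℝ → X} (hu : ElementaryAP 𝓕 u) : WeylAPAlong 𝓕 u := by
  obtain ⟨c, H, hc, rfl⟩ := hu
  exact hc.comp_uniformContinuous (DiscreteUniformity.uniformContinuous ℕ H)

theorem map₂ {α β γ : Type*} {u : ℝ → α} {v : ℝ → β} (hu : ElementaryAP 𝓕 u)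
    (hv : ElementaryAP 𝓕 v) (φ : α → β → γ) : ElementaryAP 𝓕 fun t => φ (u t) (v t) := by
  obtain ⟨c, H, hc, rfl⟩ := hu
  obtain ⟨c', H', hc', rfl⟩ := hv
  refine ⟨fun t => Nat.pair (c t) (c' t), fun n => φ (H n.unpair.1) (H' n.unpair.2),
    (hc.prodMk hc').comp_uniformContinuous
      (DiscreteUniformity.uniformContinuous (ℕ × ℕ) (Function.uncurry Nat.pair)), ?_⟩
  ext t
  simp

end ElementaryAP

end WeylAPAlong

section Dithering

open scoped BoundedContinuousFunction

variable {𝓕 : Filter ℝ}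

/-- The phase `ω t` modulo `2π` of the oscillation `exp (i ω t)`, as a homomorphism in `t`. -/
noncomputable def phase (ω : ℝ) : ℝ →+ AddCircle (2 * Real.pi) :=
  (QuotientAddGroup.mk' _).comp (AddMonoidHom.mulLeft ω)

theorem phase_apply (ω t : ℝ) : phase ω t = ((ω * t : ℝ) : AddCircle (2 * Real.pi)) := rfl

theorem continuous_phase (ω : ℝ) : Continuous (phase ω) :=
  (AddCircle.continuous_mk' _).comp (continuous_const_mul ω)

theorem norm_phase_sub {ω s t : ℝ} (h : |ω * s - ω * t| ≤ Real.pi) :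
    ‖phase ω s - phase ω t‖ = |ω * s - ω * t| := by
  rw [phase_apply, phase_apply, ← AddCircle.coe_sub]
  exact (AddCircle.norm_coe_eq_abs_iff _ Real.two_pi_pos.ne').2
    (h.trans_eq (by rw [abs_of_pos Real.two_pi_pos, mul_div_cancel_left₀ _ two_ne_zero]))

/-- A filter of translations all of whose members are relatively dense, and along which
oscillations of arbitrarily small positive frequency return. -/
structure IsReturnFilter (𝓕 : Filter ℝ) : Prop where
  relDense : ∀ s ∈ 𝓕, RelDense s
  exists_small_frequency : ∀ c > 0, ∃ ω ∈ Set.Ioo 0 c, Tendsto (phase ω) 𝓕 (𝓝 0)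

theorem IsReturnFilter.exists_separated (h𝓕 : IsReturnFilter 𝓕) {s : Set ℝ} (hs : s ∈ 𝓕) {N : ℕ}
    (hN : 0 < N) :
    ∃ ω, Tendsto (phase ω) 𝓕 (𝓝 0) ∧ ∃ τ : Fin N → ℝ, (∀ j, τ j ∈ s) ∧
      Pairwise fun i j => 1 / (2 * N : ℝ) ≤ ‖phase ω (τ i) - phase ω (τ j)‖ := by
  have hN' : (1 : ℝ) ≤ N := Nat.one_le_cast.2 hN
  obtain ⟨a, ha, hdense⟩ := h𝓕.relDense s hs
  obtain ⟨ω, ⟨hω, hωa⟩, hreturn⟩ := h𝓕.exists_small_frequency (1 / (2 * N * a)) (by positivity)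
  choose τ hτ using fun j : Fin N => hdense (j / (N * ω))
  have hphase (j : Fin N) : (j : ℝ) ≤ N * (ω * τ j) ∧ N * (ω * τ j) < j + 1 / 2 := by
    obtain ⟨⟨hl, hr⟩, -⟩ := hτ j
    have hNωa : N * ω * a < 1 / 2 := by
      rw [lt_div_iff₀ (by positivity)] at hωa
      linarith
    rw [div_le_iff₀ (by positivity)] at hl
    have hr' := mul_le_mul_of_nonneg_left hr (by positivity : 0 ≤ N * ω)
    rw [mul_add, mul_div_cancel₀ _ (by positivity : N * ω ≠ 0)] at hr'
    constructor <;> linarith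
  have hgap {i j : Fin N} (hij : i < j) : 1 / 2 ≤ N * (ω * τ j - ω * τ i) := by
    have : (i : ℝ) + 1 ≤ j := by exact_mod_cast hij
    linarith [hphase i, hphase j]
  refine ⟨ω, hreturn, τ, fun j => (hτ j).2, fun i j hij => ?_⟩
  have hsmall : |ω * τ i - ω * τ j| ≤ Real.pi := by
    have hlt (k : Fin N) : (k : ℝ) + 1 ≤ N := by exact_mod_cast k.2
    have h₁ (k : Fin N) : 0 ≤ ω * τ k :=
      nonneg_of_mul_nonneg_right ((Nat.cast_nonneg _).trans (hphase k).1) (by linarith)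
    have h₂ (k : Fin N) : ω * τ k ≤ 1 :=
      le_of_mul_le_mul_left (by linarith [hphase k, hlt k]) (by linarith : (0 : ℝ) < N)
    rw [abs_le]
    constructor <;> linarith [h₁ i, h₁ j, h₂ i, h₂ j, Real.pi_gt_three]
  beta_reduce
  rw [norm_phase_sub hsmall, div_le_iff₀ (by positivity)]
  rcases lt_or_gt_of_ne hij with hlt | hlt
  · nlinarith [hgap hlt, neg_le_abs (ω * τ i - ω * τ j)]
  · nlinarith [hgap hlt, le_abs_self (ω * τ i - ω * τ j)]

theorem exists_closed_halves_addCircle {p : ℝ} (hp : 0 < p) :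
    ∃ C C' : Set (AddCircle p), IsClosed C ∧ IsClosed C' ∧ C ∪ C' = Set.univ ∧
      (∀ a ∈ C, ∀ b ∈ C, ‖a - b‖ ≤ |‖a‖ - ‖b‖|) ∧ ∀ a ∈ C', ∀ b ∈ C', ‖a - b‖ ≤ |‖a‖ - ‖b‖| := by
  have : Fact (0 < p) := ⟨hp⟩
  set C : Set (AddCircle p) := (fun x : ℝ => (x : AddCircle p)) '' Set.Icc 0 (p / 2)
  have hC : IsClosed C := (isCompact_Icc.image (AddCircle.continuous_mk' p)).isClosed
  have hnorm {x : ℝ} (hx : |x| ≤ p / 2) : ‖(x : AddCircle p)‖ = |x| :=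
    (AddCircle.norm_coe_eq_abs_iff p hp.ne').2 (by rwa [abs_of_pos hp])
  have hiso : ∀ a ∈ C, ∀ b ∈ C, ‖a - b‖ ≤ |‖a‖ - ‖b‖| := by
    rintro _ ⟨x, ⟨hx, hx'⟩, rfl⟩ _ ⟨y, ⟨hy, hy'⟩, rfl⟩
    have hxy : |x - y| ≤ p / 2 := abs_le.2 ⟨by linarith, by linarith⟩
    rw [← AddCircle.coe_sub, hnorm hxy, hnorm (by rwa [abs_of_nonneg hx]),
      hnorm (by rwa [abs_of_nonneg hy]), abs_of_nonneg hx, abs_of_nonneg hy]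
  refine ⟨C, -C, hC, hC.neg, Set.eq_univ_of_forall fun a => ?_, hiso, fun a ha b hb => ?_⟩
  · obtain ⟨x, ⟨hl, hr⟩, rfl⟩ : a ∈ (fun x : ℝ => (x : AddCircle p)) ''
        Set.Icc (-(p / 2)) (-(p / 2) + p) := AddCircle.coe_image_Icc_eq p _ ▸ Set.mem_univ a
    rcases le_total 0 x with hx | hx
    · exact .inl ⟨x, ⟨hx, by linarith⟩, rfl⟩
    · exact .inr ⟨-x, ⟨by linarith, by linarith⟩, AddCircle.coe_neg p⟩
  · simpa [neg_add_eq_sub, norm_sub_rev] using hiso (-a) ha (-b) hb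

/-- The values of `w` put asymptotically no mass at `0`, so that the cut `w < 0` is stable under
small perturbations of `w`. -/
def NoMassNearZero (w : ℝ → ℝ) : Prop :=
  ∀ ε, 0 < ε → ∃ β > 0, kappaW {t | |w t| ≤ β} ≤ ε

-- The translates of the set by the `τ i` are almost disjoint: `u` is almost unchanged by these
-- translations, while on `C` they take the norm of `θ` to values at least `σ` apart.
theorem kappaW_abs_sub_norm_le {G ι : Type*} [SeminormedAddCommGroup G] [Fintype ι] [Nonempty ι]
    {θ : ℝ →+ G} (hθ : Continuous θ) {u : ℝ → ℝ} (hu : Measurable u) {C : Set G} (hC : IsClosed C)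
    (hiso : ∀ a ∈ C, ∀ b ∈ C, ‖a - b‖ ≤ |‖a‖ - ‖b‖|) {τ : ι → ℝ} {σ η β : ℝ}
    (hη : 0 < η) (hβ : 4 * β ≤ η * σ) (hτ : Pairwise fun i j => σ ≤ ‖θ (τ i) - θ (τ j)‖) :
    kappaW ({t | |u t - η * ‖θ t‖| ≤ β} ∩ θ ⁻¹' C)
      ≤ (Fintype.card ι : ℝ≥0∞)⁻¹ +
        ∑ i, kappaW {t | ENNReal.ofReal β ≤ edist (u (t + τ i)) (u t)} := by
  set E := ⋃ i ∈ Finset.univ, {t | ENNReal.ofReal β ≤ edist (u (t + τ i)) (u t)}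
  have hB : MeasurableSet ({t | |u t - η * ‖θ t‖| ≤ β} ∩ θ ⁻¹' C) :=
    (measurableSet_le (hu.sub (hθ.norm.measurable.const_mul η)).abs measurable_const).inter
      (hC.preimage hθ).measurableSet
  have hE : MeasurableSet E := Finset.measurableSet_biUnion _ fun i _ => measurableSet_le
    measurable_const ((hu.comp (measurable_id.add_const (τ i))).edist hu)
  refine (kappaW_packing hB hE τ fun i j hij => ?_).trans
    (add_le_add le_rfl (kappaW_biUnion_le _ _))
  rintro t ⟨⟨hi, hiC⟩, hj, hjC⟩
  by_contra hnot
  have hclose (k : ι) : |u (t + τ k) - u t| < β := by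
    simp only [E, Set.mem_iUnion, not_exists] at hnot
    have : edist (u (t + τ k)) (u t) < ENNReal.ofReal β :=
      not_le.1 (hnot k (Finset.mem_univ k))
    rwa [edist_dist, ENNReal.ofReal_lt_ofReal_iff_of_nonneg dist_nonneg, Real.dist_eq] at this
  have hsep : σ ≤ |‖θ (t + τ i)‖ - ‖θ (t + τ j)‖| := by
    simpa using (hτ hij).trans_eq (by simp) |>.trans (hiso _ hiC _ hjC)
  have hmoved := mul_le_mul_of_nonneg_left hsep hη.le
  rw [← abs_of_pos hη, ← abs_mul, abs_of_pos hη, mul_sub] at hmoved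
  simp only [Set.mem_ofPred_eq, abs_le] at hi hj
  have hi' := abs_lt.1 (hclose i)
  have hj' := abs_lt.1 (hclose j)
  rcases le_abs'.1 hmoved with h | h <;> linarith

theorem IsReturnFilter.exists_frequency_kappaW_le (h𝓕 : IsReturnFilter 𝓕) {u : ℝ → ℝ}
    (hu : Measurable u) (hret : ReturnsAlong 𝓕 u) {η : ℝ} (hη : 0 < η) {ε : ℝ≥0∞} (hε : 0 < ε) :
    ∃ ω, Tendsto (phase ω) 𝓕 (𝓝 0) ∧
      ∃ β > 0, kappaW {t | |u t - η * ‖phase ω t‖| ≤ β} ≤ ε := by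
  have hε₄ : 0 < ε / 2 / 2 := ENNReal.half_pos (ENNReal.half_pos hε.ne').ne'
  obtain ⟨N, hNε⟩ := ENNReal.exists_inv_nat_lt hε₄.ne'
  have hN : 0 < N := Nat.pos_of_ne_zero fun h => by simp [h] at hNε
  have : Nonempty (Fin N) := ⟨⟨0, hN⟩⟩
  have hN₀ : (N : ℝ≥0∞) ≠ 0 := Nat.cast_ne_zero.2 hN.ne'
  set β : ℝ := η / (8 * N)
  have hβ : 0 < β := by positivity
  have hsmall : ∀ᶠ τ in 𝓕, kappaW {t | ENNReal.ofReal β ≤ edist (u (t + τ)) (u t)}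
      ≤ ε / 2 / 2 / N :=
    ENNReal.tendsto_nhds_zero.1 (hret _ (ENNReal.ofReal_pos.2 hβ)) _
      (ENNReal.div_pos hε₄.ne' (by finiteness))
  obtain ⟨ω, hω, τ, hτ, hsep⟩ := h𝓕.exists_separated hsmall hN
  obtain ⟨C, C', hC, hC', huniv, hiso, hiso'⟩ := exists_closed_halves_addCircle Real.two_pi_pos
  have hhalf {D : Set (AddCircle (2 * Real.pi))} (hD : IsClosed D)
      (hDiso : ∀ a ∈ D, ∀ b ∈ D, ‖a - b‖ ≤ |‖a‖ - ‖b‖|) :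
      kappaW ({t | |u t - η * ‖phase ω t‖| ≤ β} ∩ phase ω ⁻¹' D) ≤ ε / 2 := by
    refine (kappaW_abs_sub_norm_le (continuous_phase ω) hu hD hDiso hη ?_ hsep).trans ?_
    · exact le_of_eq (by simp only [β]; field_simp; norm_num)
    · calc _ ≤ ε / 2 / 2 + ∑ _i : Fin N, ε / 2 / 2 / N := by
            rw [Fintype.card_fin]
            exact add_le_add hNε.le (Finset.sum_le_sum fun i _ => hτ i)
        _ = ε / 2 := by
            rw [Finset.sum_const, Finset.card_univ, Fintype.card_fin, nsmul_eq_mul,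
              ENNReal.mul_div_cancel hN₀ (by finiteness), ENNReal.add_halves]
  refine ⟨ω, hω, β, hβ, ?_⟩
  rw [← ENNReal.add_halves ε]
  refine (kappaW_le_add ?_).trans (add_le_add (hhalf hC hiso) (hhalf hC' hiso'))
  rw [← Set.inter_union_distrib_left, ← Set.preimage_union, huniv, Set.preimage_univ,
    Set.inter_univ]

theorem isClosed_setOf_returnsAlong (𝓕 : Filter ℝ) :
    IsClosed {b : ℝ →ᵇ ℝ | ReturnsAlong 𝓕 b} := by
  refine isClosed_of_closure_subset fun b hb => ReturnsAlong.of_ae_approx fun ε hε => ?_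
  obtain ⟨b', hb', hdist⟩ := EMetric.mem_closure_iff.1 hb ε hε
  refine ⟨b', hb', Eventually.of_forall fun t => lt_of_le_of_lt ?_ hdist⟩
  rw [edist_comm b, edist_dist, edist_dist]
  exact ENNReal.ofReal_le_ofReal (BoundedContinuousFunction.dist_coe_le_dist t)

theorem isOpen_setOf_exists_kappaW_le (φ : ℝ → ℝ) (ε : ℝ≥0∞) :
    IsOpen {b : ℝ →ᵇ ℝ | ∃ β > 0, kappaW {t | |φ t + b t| ≤ β} ≤ ε} := by
  refine Metric.isOpen_iff.2 fun b ⟨β, hβ, hκ⟩ => ⟨β / 2, half_pos hβ, fun b' hb' => ?_⟩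
  refine ⟨β / 2, half_pos hβ, (kappaW_mono fun t ht => ?_).trans hκ⟩
  have hclose : |b' t - b t| ≤ β / 2 :=
    (BoundedContinuousFunction.dist_coe_le_dist t).trans (Metric.mem_ball.1 hb').le
  simp only [Set.mem_ofPred_eq, abs_le] at ht hclose ⊢
  constructor <;> linarith

theorem IsReturnFilter.exists_near_kappaW_le (h𝓕 : IsReturnFilter 𝓕) {φ : ℝ → ℝ}
    (hφ : Measurable φ) (hret : ReturnsAlong 𝓕 φ) {b : ℝ →ᵇ ℝ} (hb : ReturnsAlong 𝓕 b) {r : ℝ}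
    (hr : 0 < r) {ε : ℝ≥0∞} (hε : 0 < ε) :
    ∃ b' : ℝ →ᵇ ℝ, ReturnsAlong 𝓕 b' ∧ dist b' b < r ∧
      ∃ β > 0, kappaW {t | |φ t + b' t| ≤ β} ≤ ε := by
  set η := r / (2 * Real.pi)
  have hη : 0 < η := div_pos hr Real.two_pi_pos
  obtain ⟨ω, hω, β, hβ, hκ⟩ := h𝓕.exists_frequency_kappaW_le (hφ.add b.continuous.measurable)
    (hret.add hb) hη hε
  have hnorm (a : AddCircle (2 * Real.pi)) : ‖a‖ ≤ Real.pi := by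
    simpa [abs_of_pos Real.pi_pos] using
      AddCircle.norm_le_half_period (x := a) _ Real.two_pi_pos.ne'
  have hbound (t : ℝ) : ‖-(η * ‖phase ω t‖)‖ ≤ r / 2 := by
    rw [norm_neg, norm_mul, norm_norm, Real.norm_of_nonneg hη.le]
    exact (mul_le_mul_of_nonneg_left (hnorm _) hη.le).trans_eq (by simp only [η]; field_simp)
  set wave : ℝ →ᵇ ℝ :=
    .ofNormedAddCommGroup _ ((continuous_phase ω).norm.const_mul η).neg _ hbound
  have hwave : ReturnsAlong 𝓕 wave :=
    (ReturnsAlong.addMonoidHom hω).comp_uniformContinuous (φ := fun a => -(η * ‖a‖))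
      (uniformContinuous_norm.const_smul η).neg
  refine ⟨b + wave, hb.add hwave, ?_, β, hβ,
    by simpa [wave, ← sub_eq_add_neg, add_sub_assoc] using hκ⟩
  rw [dist_eq_norm, add_sub_cancel_left]
  exact (BoundedContinuousFunction.norm_ofNormedAddCommGroup_le _ (half_pos hr).le _).trans_lt
    (half_lt_self hr)

theorem IsReturnFilter.exists_dither (h𝓕 : IsReturnFilter 𝓕) {φ : ℝ → ℝ} (hφ : Measurable φ)
    (hret : ReturnsAlong 𝓕 φ) {r : ℝ} (hr : 0 < r) :
    ∃ b : ℝ →ᵇ ℝ, ReturnsAlong 𝓕 b ∧ ‖b‖ < r ∧ NoMassNearZero fun t => φ t + b t := by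
  set B := {b : ℝ →ᵇ ℝ | ReturnsAlong 𝓕 b}
  set O : ℕ → Set (ℝ →ᵇ ℝ) := fun n =>
    {b | ∃ β > 0, kappaW {t | |φ t + b t| ≤ β} ≤ (n : ℝ≥0∞)⁻¹}
  have : CompleteSpace B := (isClosed_setOf_returnsAlong 𝓕).completeSpace_coe
  have hdense (n : ℕ) : Dense ((↑) ⁻¹' O n : Set B) := Metric.dense_iff.2 fun b ρ hρ => by
    obtain ⟨b', hb', hdist, hO⟩ := h𝓕.exists_near_kappaW_le hφ hret b.2 hρ
      (ENNReal.inv_pos.2 (ENNReal.natCast_ne_top n))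
    exact ⟨⟨b', hb'⟩, hdist, hO⟩
  have hgeneric : Dense (⋂ n, ((↑) ⁻¹' O n : Set B)) := dense_iInter_of_isOpen_nat
    (fun n => (isOpen_setOf_exists_kappaW_le φ _).preimage continuous_subtype_val) hdense
  obtain ⟨b, hb, hbO⟩ := Metric.dense_iff.1 hgeneric ⟨0, ReturnsAlong.const 0⟩ r hr
  refine ⟨b, b.2, by simpa [Subtype.dist_eq] using hb, fun ε hε => ?_⟩
  obtain ⟨n, hn⟩ := ENNReal.exists_inv_nat_lt hε.ne'
  obtain ⟨β, hβ, hκ⟩ := Set.mem_iInter.1 hbO n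
  exact ⟨β, hβ, hκ.trans hn.le⟩

theorem NoMassNearZero.tendsto_kappaW_neg_change {w : ℝ → ℝ} (hw : NoMassNearZero w)
    (hret : ReturnsAlong 𝓕 w) :
    Tendsto (fun τ => kappaW {t | ¬(w (t + τ) < 0 ↔ w t < 0)}) 𝓕 (𝓝 0) := by
  refine ENNReal.tendsto_nhds_zero.2 fun ε hε => ?_
  have hε₂ : 0 < ε / 2 := ENNReal.half_pos hε.ne'
  obtain ⟨β, hβ, hκ⟩ := hw _ hε₂
  filter_upwards [ENNReal.tendsto_nhds_zero.1 (hret _ (ENNReal.ofReal_pos.2 hβ)) _ hε₂] with τ hτ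
  rw [← ENNReal.add_halves ε]
  refine (kappaW_le_add fun t ht => ?_).trans (add_le_add hκ hτ)
  by_contra hnot
  simp only [Set.mem_union, Set.mem_ofPred_eq, not_or, not_le, edist_dist, Real.dist_eq,
    ENNReal.ofReal_lt_ofReal_iff hβ, lt_abs, abs_lt] at hnot
  obtain ⟨h | h, hl, hr⟩ := hnot
  · exact ht (iff_of_false (by linarith) (by linarith))
  · exact ht (iff_of_true (by linarith) (by linarith))

theorem weylAPAlong_find {p : ℕ → ℝ → Prop} [∀ t, DecidablePred fun i => p i t]
    (hex : ∀ t, ∃ i, p i t) (hm : ∀ i, MeasurableSet {t | p i t})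
    (hstable : ∀ i, Tendsto (fun τ => kappaW {t | ¬(p i (t + τ) ↔ p i t)}) 𝓕 (𝓝 0))
    (htail : ∀ η, 0 < η → ∃ K, kappaW {t | ∀ i < K, ¬p i t} ≤ η) :
    WeylAPAlong 𝓕 fun t => Nat.find (hex t) where
  aestronglyMeasurable := (measurable_find hex hm).aestronglyMeasurable
  returnsAlong ε hε := ENNReal.tendsto_nhds_zero.2 fun η hη => by
    obtain ⟨K, hK⟩ := htail _ (ENNReal.half_pos hη.ne')
    have hsum : Tendsto (fun τ => ∑ i ∈ Finset.range K, kappaW {t | ¬(p i (t + τ) ↔ p i t)}) 𝓕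
        (𝓝 0) := by
      simpa using tendsto_finsetSum (Finset.range K) fun i _ => hstable i
    filter_upwards [ENNReal.tendsto_nhds_zero.1 hsum _ (ENNReal.half_pos hη.ne')] with τ hτ
    rw [← ENNReal.add_halves η]
    refine (kappaW_le_add fun t ht => ?_).trans
      (add_le_add hK ((kappaW_biUnion_le (Finset.range K) _).trans hτ))
    by_contra hnot
    simp only [Set.mem_union, Set.mem_ofPred_eq, Set.mem_iUnion, not_or, not_forall, not_exists,
      not_not, Finset.mem_range] at hnot
    obtain ⟨⟨i, hi, hpi⟩, hsame⟩ := hnot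
    have hlt : Nat.find (hex t) < K := (Nat.find_min' _ hpi).trans_lt hi
    have heq : Nat.find (hex (t + τ)) = Nat.find (hex t) := (Nat.find_eq_iff _).2
      ⟨(hsame _ hlt).2 (Nat.find_spec (hex t)), fun j hj hpj =>
        Nat.find_min _ hj ((hsame j (hj.trans hlt)).1 hpj)⟩
    exact hε.not_ge (by simpa [heq] using ht)
  weylTotallyBounded ε hε η hη := by
    obtain ⟨K, hK⟩ := htail η hη
    refine ⟨Set.Iio K, Set.finite_Iio K, (kappaW_mono ?_).trans hK⟩
    exact fun t ht i hi hpi => hε.not_ge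
      (by simpa using ht (Nat.find (hex t)) ((Nat.find_min' _ hpi).trans_lt hi))

theorem IsReturnFilter.exists_index (h𝓕 : IsReturnFilter 𝓕) {φ : ℕ → ℝ → ℝ}
    (hφ : ∀ i, Measurable (φ i)) (hret : ∀ i, ReturnsAlong 𝓕 (φ i)) {r : ℝ} (hr : 0 < r)
    (hex : ∀ t, ∃ i, φ i t < r) (htail : ∀ η, 0 < η → ∃ K, kappaW {t | ∀ i < K, r ≤ φ i t} ≤ η) :
    ∃ c : ℝ → ℕ, WeylAPAlong 𝓕 c ∧ ∀ t, φ (c t) t < 2 * r := by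
  classical
  have hret' (i) : ReturnsAlong 𝓕 fun t => φ i t - 3 / 2 * r := (hret i).comp_uniformContinuous
    (φ := fun x => x - 3 / 2 * r) (uniformContinuous_id.sub uniformContinuous_const)
  choose b hb hbr hmass using fun i =>
    h𝓕.exists_dither ((hφ i).sub_const (3 / 2 * r)) (hret' i) (half_pos hr)
  have hbound (i t) : |b i t| < r / 2 := ((b i).norm_coe_le_norm t).trans_lt (hbr i)
  have hneg {i t} (h : φ i t < r) : φ i t - 3 / 2 * r + b i t < 0 := by
    linarith [abs_lt.1 (hbound i t)]
  have hwex (t) : ∃ i, φ i t - 3 / 2 * r + b i t < 0 := (hex t).imp fun i => hneg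
  refine ⟨fun t => Nat.find (hwex t), weylAPAlong_find hwex ?_ (fun i => ?_) fun η hη => ?_, ?_⟩
  · exact fun i => measurableSet_lt
      (((hφ i).sub_const _).add (b i).continuous.measurable) measurable_const
  · exact (hmass i).tendsto_kappaW_neg_change
      ((hret' i).add (hb i))
  · refine (htail η hη).imp fun K hK => (kappaW_mono ?_).trans hK
    exact fun t ht i hi => le_of_not_gt fun h => ht i hi (hneg h)
  · intro t
    linarith [Nat.find_spec (hwex t), abs_lt.1 (hbound (Nat.find (hwex t)) t)]

end Dithering

section TruncatedDistance

variable {X : Type*} [PseudoEMetricSpace X]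

/-- The truncated distance `min 1 (edist x y)` as a real number. It specialises to `bdist` on a
metric space and to `clDist` on closed subsets, where `edist` is the Hausdorff distance. -/
noncomputable def truncEDist (x y : X) : ℝ :=
  (min 1 (edist x y)).toReal

theorem bdist_eq_truncEDist {α : Type*} [PseudoMetricSpace α] :
    (bdist : α → α → ℝ) = truncEDist := by
  ext x y
  rw [bdist, truncEDist, edist_dist, ← ENNReal.ofReal_one, ← ENNReal.ofReal_min,
    ENNReal.toReal_ofReal (le_min zero_le_one dist_nonneg)]

theorem clDist_eq_truncEDist {α : Type*} [MetricSpace α] :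
    (clDist : Closeds α → Closeds α → ℝ) = truncEDist :=
  rfl

theorem ofReal_truncEDist (x y : X) : ENNReal.ofReal (truncEDist x y) = min 1 (edist x y) :=
  ENNReal.ofReal_toReal (min_lt_of_left_lt ENNReal.one_lt_top).ne

theorem truncEDist_lt_iff {x y : X} {r : ℝ} (hr : r ≤ 1) :
    truncEDist x y < r ↔ edist x y < ENNReal.ofReal r := by
  rw [truncEDist, ← ENNReal.lt_ofReal_iff_toReal_lt (min_lt_of_left_lt ENNReal.one_lt_top).ne,
    min_lt_iff, or_iff_right (ENNReal.ofReal_le_one.2 hr).not_gt]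

theorem truncEDist_triangle (x y z : X) :
    truncEDist x z ≤ truncEDist x y + truncEDist y z := by
  have hnonneg (a b : X) : 0 ≤ truncEDist a b := ENNReal.toReal_nonneg
  rw [← ENNReal.ofReal_le_ofReal_iff (add_nonneg (hnonneg _ _) (hnonneg _ _)),
    ENNReal.ofReal_add (hnonneg _ _) (hnonneg _ _)]
  simp only [ofReal_truncEDist]
  rcases le_total 1 (edist x y) with hxy | hxy
  · exact (min_le_left _ _).trans (by simp [hxy])
  rcases le_total 1 (edist y z) with hyz | hyz
  · exact (min_le_left _ _).trans (by simp [hyz])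
  · simpa [hxy, hyz] using Or.inr (edist_triangle x y z)

theorem truncEDist_comm (x y : X) : truncEDist x y = truncEDist y x := by
  rw [truncEDist, edist_comm, truncEDist]

theorem uniformContinuous_truncEDist_left (a : X) : UniformContinuous (truncEDist · a) := by
  refine LipschitzWith.uniformContinuous (K := 1) (LipschitzWith.of_edist_le fun x y => ?_)
  calc edist (truncEDist x a) (truncEDist y a)
      ≤ ENNReal.ofReal (truncEDist x y) := by
        rw [edist_dist, Real.dist_eq]
        refine ENNReal.ofReal_le_ofReal (abs_sub_le_iff.2 ⟨?_, ?_⟩)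
        · linarith [truncEDist_triangle x y a]
        · linarith [truncEDist_triangle y x a, truncEDist_comm x y]
    _ ≤ edist x y := (ofReal_truncEDist x y).trans_le (min_le_right _ _)

end TruncatedDistance

section Discretization

variable {X : Type*} [PseudoEMetricSpace X] {𝓕 : Filter ℝ} {u : ℝ → X}

theorem WeylTotallyBounded.exists_initial_net (hu : WeylTotallyBounded u) {A : ℕ → X}
    (hA : ∀ t, u t ∈ closure (Set.range A)) {ε η : ℝ≥0∞} (hε : 0 < ε) (hη : 0 < η) :
    ∃ K, kappaW {t | ∀ i < K, ε ≤ edist (u t) (A i)} ≤ η := by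
  have hε₃ : 0 < ε / 3 := ENNReal.div_pos hε.ne' (by finiteness)
  obtain ⟨s, hs, hκ⟩ := hu _ hε₃ η hη
  have hnear (x : X) : ∃ i, ∀ t, edist (u t) x < ε / 3 → edist (u t) (A i) < ε := by
    by_cases hx : ∃ t₀, edist (u t₀) x < ε / 3
    · obtain ⟨t₀, ht₀⟩ := hx
      obtain ⟨_, ⟨i, rfl⟩, hi⟩ := EMetric.mem_closure_iff.1 (hA t₀) _ hε₃
      refine ⟨i, fun t ht => (edist_triangle4 (u t) x (u t₀) (A i)).trans_lt ?_⟩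
      rw [edist_comm x]
      exact ENNReal.add_thirds ε ▸ ENNReal.add_lt_add (ENNReal.add_lt_add ht ht₀) hi
    · exact ⟨0, fun t ht => absurd ⟨t, ht⟩ hx⟩
  choose i hi using hnear
  obtain ⟨K, hK⟩ := (hs.image i).bddAbove
  refine ⟨K + 1, (kappaW_mono ?_).trans hκ⟩
  exact fun t ht x hx => le_of_not_gt fun hlt => (hi x t hlt).not_ge
    (ht _ (Nat.lt_succ_of_le (hK (Set.mem_image_of_mem i hx))))

theorem IsReturnFilter.exists_elementaryAP_edist_lt (h𝓕 : IsReturnFilter 𝓕)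
    (hu : WeylAPAlong 𝓕 u) {r : ℝ} (hr : 0 < r) :
    ∃ v, ElementaryAP 𝓕 v ∧ ∀ᵐ t, edist (u t) (v t) < ENNReal.ofReal r := by
  obtain ⟨u', hu'm, hae⟩ := hu.aestronglyMeasurable
  have hu' : WeylAPAlong 𝓕 u' := .of_ae_approx fun ε hε =>
    ⟨u, hu, hae.mono fun t ht => by simpa [ht] using hε⟩
  obtain ⟨D, hDc, hD⟩ := hu'm.isSeparable_range
  obtain ⟨A, rfl⟩ := hDc.exists_eq_range
    (closure_nonempty_iff.1 ((Set.range_nonempty u').mono hD))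
  have hA (t : ℝ) : u' t ∈ closure (Set.range A) := hD (Set.mem_range_self t)
  obtain ⟨ρ, hρ, h2ρ⟩ : ∃ ρ : ℝ, 0 < ρ ∧ 2 * ρ = min 1 r :=
    ⟨min 1 r / 2, half_pos (lt_min zero_lt_one hr), mul_div_cancel₀ _ two_ne_zero⟩
  have hρ1 : ρ ≤ 1 := by linarith [min_le_left 1 r]
  have hφ (i : ℕ) : Measurable fun t => truncEDist (u' t) (A i) :=
    ((uniformContinuous_truncEDist_left (A i)).continuous.comp_stronglyMeasurable hu'm).measurable
  have hret (i : ℕ) : ReturnsAlong 𝓕 fun t => truncEDist (u' t) (A i) :=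
    hu'.returnsAlong.comp_uniformContinuous (φ := (truncEDist · (A i)))
      (uniformContinuous_truncEDist_left (A i))
  have hex (t : ℝ) : ∃ i, truncEDist (u' t) (A i) < ρ := by
    obtain ⟨_, ⟨i, rfl⟩, hi⟩ := EMetric.mem_closure_iff.1 (hA t) _ (ENNReal.ofReal_pos.2 hρ)
    exact ⟨i, (truncEDist_lt_iff hρ1).2 hi⟩
  have htail (η : ℝ≥0∞) (hη : 0 < η) :
      ∃ K, kappaW {t | ∀ i < K, ρ ≤ truncEDist (u' t) (A i)} ≤ η := by
    simpa only [← not_lt, truncEDist_lt_iff hρ1] using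
      hu'.weylTotallyBounded.exists_initial_net hA (ENNReal.ofReal_pos.2 hρ) hη
  obtain ⟨c, hc, hcA⟩ := h𝓕.exists_index hφ hret hρ hex htail
  refine ⟨A ∘ c, ⟨c, A, hc, rfl⟩, hae.mono fun t ht => ?_⟩
  rw [ht]
  exact ((truncEDist_lt_iff (h2ρ.trans_le (min_le_left 1 r))).1 (hcA t)).trans_le
    (ENNReal.ofReal_le_ofReal (h2ρ.trans_le (min_le_right 1 r)))

end Discretization

section Selection

open Metric

variable {X : Type*} [PseudoMetricSpace X]

open Classical in
/-- A point of `A` almost nearest to `p`: its distance to `p` exceeds `infDist p A` by less than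
`r`. The junk value `p` is used when there is none. -/
noncomputable def approxProj (r : ℝ) (p : X) (A : Set X) : X :=
  if h : ∃ a ∈ A, dist p a < infDist p A + r then h.choose else p

theorem approxProj_spec {r : ℝ} (hr : 0 < r) (p : X) {A : Set X} (hA : A.Nonempty) :
    approxProj r p A ∈ A ∧ dist p (approxProj r p A) < infDist p A + r := by
  have h : ∃ a ∈ A, dist p a < infDist p A + r := (infDist_lt_iff hA).1 (lt_add_of_pos_right _ hr)
  rw [approxProj, dif_pos h]
  exact h.choose_spec

/-- Starting from `y`, project almost optimally on `A 0`, then on `A 1`, and so on, with errors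
decreasing geometrically from `ρ`. -/
noncomputable def successiveProj (ρ : ℝ) (A : ℕ → Set X) (y : X) : ℕ → X
  | 0 => approxProj ρ y (A 0)
  | n + 1 => approxProj (ρ / 2 ^ n) (successiveProj ρ A y n) (A (n + 1))

theorem exists_mem_forall_dist_le_of_geometric {S : Set X} (hS : IsComplete S) (hne : S.Nonempty)
    {p : ℕ → X} {C : ℝ} (hstep : ∀ n, dist (p n) (p (n + 1)) ≤ C / 2 ^ n)
    (hinf : ∀ n, infDist (p n) S < C / 2 ^ n) :
    ∃ l ∈ S, ∀ n, dist (p n) l ≤ 2 * C / 2 ^ n := by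
  choose s hsS hs using fun n => (infDist_lt_iff hne).1 (hinf n)
  have hC : 0 ≤ C := by simpa using dist_nonneg.trans (hstep 0)
  have hzero : Tendsto (fun n : ℕ => C / 2 ^ n) atTop (𝓝 0) :=
    tendsto_const_nhds.div_atTop (tendsto_pow_atTop_atTop_of_one_lt one_lt_two)
  have hcauchy : CauchySeq s := by
    refine cauchySeq_of_le_geometric_two (C := 6 * C) fun n => ?_
    have hhalf : C / 2 ^ (n + 1) ≤ C / 2 ^ n := by gcongr <;> simp
    calc dist (s n) (s (n + 1))
        ≤ dist (s n) (p n) + dist (p n) (p (n + 1)) + dist (p (n + 1)) (s (n + 1)) :=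
          dist_triangle4 _ _ _ _
      _ ≤ C / 2 ^ n + C / 2 ^ n + C / 2 ^ n := by
          gcongr
          · exact (dist_comm _ _).trans_le (hs n).le
          · exact hstep n
          · exact (hs (n + 1)).le.trans hhalf
      _ = 6 * C / 2 / 2 ^ n := by ring
  obtain ⟨l, hlS, hl⟩ := cauchySeq_tendsto_of_isComplete hS hsS hcauchy
  have hsp : Tendsto (fun n => dist (s n) (p n)) atTop (𝓝 0) :=
    squeeze_zero (fun _ => dist_nonneg) (fun n => (dist_comm _ _).trans_le (hs n).le) hzero
  exact ⟨l, hlS, dist_le_of_le_geometric_two_of_tendsto (fun n => (hstep n).trans_eq (by ring))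
    (tendsto_of_tendsto_of_dist hl hsp)⟩

theorem infDist_le_add_of_hausdorffEDist_lt {A B : Set X} {r : ℝ}
    (h : hausdorffEDist A B < ENNReal.ofReal r) (p : X) : infDist p B ≤ infDist p A + r :=
  (infDist_le_infDist_add_hausdorffDist h.ne_top).trans
    (add_le_add le_rfl (ENNReal.toReal_le_of_le_ofReal
      (ENNReal.ofReal_pos.1 (zero_le.trans_lt h)).le h.le))

theorem exists_mem_forall_dist_successiveProj_le {S : Set X} (hS : IsComplete S)
    (hne : S.Nonempty) {A : ℕ → Set X} {ρ : ℝ} (hρ : 0 < ρ)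
    (hA : ∀ n, hausdorffEDist S (A n) < ENNReal.ofReal (ρ / 2 ^ n)) {x y : X}
    (hxy : dist x y < ρ) :
    ∃ l ∈ S, dist l x < infDist x S + 9 * ρ ∧
      ∀ n, dist (successiveProj ρ A y n) l ≤ 5 * ρ / 2 ^ n := by
  set p := successiveProj ρ A y
  have hpos (n : ℕ) : 0 < ρ / 2 ^ n := by positivity
  have hAne (n : ℕ) : (A n).Nonempty := nonempty_of_hausdorffEDist_ne_top hne (hA n).ne_top
  have hproj (n : ℕ) (q : X) : infDist q (A n) ≤ infDist q S + ρ / 2 ^ n :=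
    infDist_le_add_of_hausdorffEDist_lt (hA n) q
  have hpA (n : ℕ) : p n ∈ A n := by
    cases n with
    | zero => exact (approxProj_spec hρ _ (hAne 0)).1
    | succ n => exact (approxProj_spec (hpos n) _ (hAne (n + 1))).1
  have hpS (n : ℕ) : infDist (p n) S ≤ ρ / 2 ^ n := by
    simpa [infDist_zero_of_mem (hpA n)] using
      infDist_le_add_of_hausdorffEDist_lt (hausdorffEDist_comm.trans_lt (hA n)) (p n)
  have hstep (n : ℕ) : dist (p n) (p (n + 1)) ≤ 5 / 2 * ρ / 2 ^ n :=
    calc dist (p n) (p (n + 1))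
        ≤ infDist (p n) (A (n + 1)) + ρ / 2 ^ n :=
          (approxProj_spec (hpos n) (p n) (hAne (n + 1))).2.le
      _ ≤ ρ / 2 ^ n + ρ / 2 ^ (n + 1) + ρ / 2 ^ n := by
          gcongr
          exact (hproj (n + 1) (p n)).trans (add_le_add (hpS n) le_rfl)
      _ = 5 / 2 * ρ / 2 ^ n := by ring
  obtain ⟨l, hlS, hl⟩ := exists_mem_forall_dist_le_of_geometric hS hne hstep fun n =>
    (hpS n).trans_lt (by gcongr; linarith)
  refine ⟨l, hlS, ?_, fun n => (hl n).trans_eq (by ring)⟩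
  calc dist l x ≤ dist x y + dist y (p 0) + dist (p 0) l :=
        (dist_comm _ _).trans_le (dist_triangle4 _ _ _ _)
    _ < ρ + (infDist x S + ρ + ρ + ρ) + 5 * ρ := by
        refine add_lt_add_of_lt_of_le (add_lt_add hxy ?_) ((hl 0).trans_eq (by ring))
        have hy : infDist y S ≤ infDist x S + dist x y :=
          dist_comm x y ▸ infDist_le_infDist_add_dist
        have hproj₀ : infDist y (A 0) ≤ infDist y S + ρ := by simpa using hproj 0 y
        have hp₀ : dist y (p 0) < infDist y (A 0) + ρ := (approxProj_spec hρ y (hAne 0)).2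
        linarith
    _ = infDist x S + 9 * ρ := by ring

theorem IsReturnFilter.exists_weylAPAlong_selection {U : Type*} [MetricSpace U] {𝓕 : Filter ℝ}
    (h𝓕 : IsReturnFilter 𝓕) {F : ℝ → Closeds U} (hF : WeylAPAlong 𝓕 F)
    (hFne : ∀ t, (F t : Set U).Nonempty) (hFc : ∀ t, IsComplete (F t : Set U)) {g : ℝ → U}
    (hg : WeylAPAlong 𝓕 g) {δ : ℝ} (hδ : 0 < δ) :
    ∃ f, WeylAPAlong 𝓕 f ∧ ∀ᵐ t, f t ∈ F t ∧ dist (f t) (g t) < infDist (g t) (F t) + δ := by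
  obtain ⟨ρ, hρ, rfl⟩ : ∃ ρ, 0 < ρ ∧ 9 * ρ = δ :=
    ⟨δ / 9, by positivity, mul_div_cancel₀ _ (by norm_num)⟩
  choose v hv hclose using fun n : ℕ => h𝓕.exists_elementaryAP_edist_lt (hF.prodMk hg)
    (show 0 < ρ / 2 ^ n by positivity)
  set p : ℕ → ℝ → U := fun n t => successiveProj ρ (fun n => (v n t).1) (v 0 t).2 n
  have hp (n : ℕ) : WeylAPAlong 𝓕 (p n) := by
    refine ElementaryAP.weylAPAlong ?_
    induction n with
    | zero => exact (hv 0).map₂ (hv 0) fun a b => approxProj ρ a.2 b.1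
    | succ n ih => exact ih.map₂ (hv (n + 1)) fun q b => approxProj (ρ / 2 ^ n) q b.1
  obtain ⟨f, hf⟩ := Eventually.choice <| (ae_all_iff.2 hclose).mono fun t ht =>
    exists_mem_forall_dist_successiveProj_le (hFc t) (hFne t) hρ
      (A := fun n => (v n t).1) (x := g t) (y := (v 0 t).2)
      (fun n => (le_max_left _ _).trans_lt (ht n))
      (by simpa [edist_dist, ENNReal.ofReal_lt_ofReal_iff hρ] using
        (le_max_right _ _).trans_lt (ht 0))
  refine ⟨f, .of_ae_approx fun ε hε => ?_, hf.mono fun t ht => ⟨ht.1, ht.2.1⟩⟩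
  have hzero : Tendsto (fun n : ℕ => ENNReal.ofReal (5 * ρ / 2 ^ n)) atTop (𝓝 0) := by
    simpa using ENNReal.tendsto_ofReal
      (tendsto_const_nhds.div_atTop (tendsto_pow_atTop_atTop_of_one_lt one_lt_two))
  obtain ⟨n, hn⟩ := (hzero.eventually_lt_const hε).exists
  refine ⟨p n, hp n, hf.mono fun t ht => lt_of_le_of_lt ?_ hn⟩
  exact (edist_dist _ _).trans_le (ENNReal.ofReal_le_ofReal (ht.2.2 n))

end Selection

section AlmostPeriodFilter

theorem smul_restrict_le_withDensity {α : Type*} [MeasurableSpace α] {μ : Measure α}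
    {φ : α → ℝ≥0∞} (hφ : AEMeasurable φ μ) (c : ℝ≥0∞) :
    c • μ.restrict {t | c ≤ φ t} ≤ μ.withDensity φ :=
  Measure.le_iff.2 fun A hA => by
    rw [withDensity_apply _ hA, Measure.smul_apply, Measure.restrict_apply hA, Set.inter_comm,
      ← Measure.restrict_apply' hA]
    exact mul_meas_ge_le_lintegral₀ hφ.restrict c

theorem withDensity_le_smul_add_restrict {α : Type*} [MeasurableSpace α] (μ : Measure α)
    {φ : α → ℝ≥0∞} (hφ : ∀ t, φ t ≤ 1) (c : ℝ≥0∞) :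
    μ.withDensity φ ≤ c • μ + μ.restrict {t | c ≤ φ t} :=
  Measure.le_iff.2 fun A hA => by
    rw [withDensity_apply _ hA, Measure.add_apply, Measure.smul_apply, Measure.restrict_apply hA,
      Set.inter_comm, ← Measure.restrict_apply' hA]
    calc ∫⁻ t in A, φ t ∂μ
        ≤ ∫⁻ t in A, c + {t | c ≤ φ t}.indicator 1 t ∂μ := by
          refine lintegral_mono fun t => ?_
          by_cases ht : c ≤ φ t
          · simpa [ht] using (hφ t).trans le_add_self
          · simpa [ht] using (not_le.1 ht).le
      _ ≤ c • μ A + μ.restrict A {t | c ≤ φ t} := by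
          rw [lintegral_add_left measurable_const, setLIntegral_const, smul_eq_mul]
          exact add_le_add le_rfl (lintegral_indicator_one_le _)

variable {X : Type*} [PseudoEMetricSpace X] {𝓕 : Filter ℝ}

theorem mul_kappaW_le_weylDinf {f g : ℝ → X} (hf : AEStronglyMeasurable f volume)
    (hg : AEStronglyMeasurable g volume) {c : ℝ≥0∞} (hc : c ≤ 1) :
    c * kappaW {t | c ≤ edist (f t) (g t)} ≤ weylDinf truncEDist 1 f g := by
  have hφ : AEMeasurable (fun t => min 1 (edist (f t) (g t))) volume :=
    aemeasurable_const.min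
      (continuous_edist.comp_aestronglyMeasurable (hf.prodMk hg)).aemeasurable
  rw [weylDinf_one_eq_weylDensity, kappaW_eq_weylDensity,
    ← weylDensity_smul (hc.trans_lt ENNReal.one_lt_top).ne]
  simpa [ofReal_truncEDist, hc] using weylDensity_mono (smul_restrict_le_withDensity hφ c)

theorem weylDinf_le_add_kappaW (f g : ℝ → X) {c : ℝ≥0∞} (hc : c ≤ 1) :
    weylDinf truncEDist 1 f g ≤ c + kappaW {t | c ≤ edist (f t) (g t)} := by
  have hmass := (weylDensity_mono (withDensity_le_smul_add_restrict volume
    (φ := fun t => min 1 (edist (f t) (g t))) (fun t => min_le_left _ _) c)).trans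
    (weylDensity_add_le _ _)
  rw [weylDensity_smul (hc.trans_lt ENNReal.one_lt_top).ne, weylDensity_volume, mul_one] at hmass
  simpa [weylDinf_one_eq_weylDensity, kappaW_eq_weylDensity, ofReal_truncEDist, hc] using hmass

/-- The filter generated by the sets of almost periods of `f` for the Weyl semimetric of order
`1`. -/
noncomputable def almostPeriodFilter {α : Type*} (d : α → α → ℝ) (f : ℝ → α) : Filter ℝ :=
  comap (fun τ => weylDinf d 1 f fun t => f (t + τ)) (𝓝 0)

theorem hasBasis_almostPeriodFilter {α : Type*} (d : α → α → ℝ) (f : ℝ → α) :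
    (almostPeriodFilter d f).HasBasis (0 < ·) (APeriods d 1 · f) := by
  refine (ENNReal.nhds_zero_basis.comap _).to_hasBasis (fun ε hε => ?_)
    fun ε hε => ⟨_, ENNReal.ofReal_pos.2 hε, subset_rfl⟩
  have hmin : min 1 ε ≠ ∞ := (min_lt_of_left_lt ENNReal.one_lt_top).ne
  refine ⟨(min 1 ε).toReal, ENNReal.toReal_pos (lt_min one_pos hε).ne' hmin, fun τ hτ => ?_⟩
  exact (hτ.trans_eq (ENNReal.ofReal_toReal hmin)).trans_le (min_le_right _ _)

theorem monotone_aPeriods {α : Type*} (d : α → α → ℝ) (f : ℝ → α) :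
    Monotone (APeriods d 1 · f) := fun _ _ h _ hτ => hτ.trans_le (ENNReal.ofReal_le_ofReal h)

theorem hasBasis_inf_of_monotone {α : Type*} {l l' : Filter α} {s s' : ℝ → Set α}
    (h : l.HasBasis (0 < ·) s) (h' : l'.HasBasis (0 < ·) s') (hs : Monotone s)
    (hs' : Monotone s') : (l ⊓ l').HasBasis (0 < ·) fun ε => s ε ∩ s' ε :=
  (h.inf' h').to_hasBasis
    (fun ε hε => ⟨min ε.1 ε.2, lt_min hε.1 hε.2,
      Set.inter_subset_inter (hs (min_le_left _ _)) (hs' (min_le_right _ _))⟩)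
    fun ε hε => ⟨⟨ε, ε⟩, ⟨hε, hε⟩, subset_rfl⟩

theorem le_almostPeriodFilter_iff {f : ℝ → X} (hf : AEStronglyMeasurable f volume) :
    𝓕 ≤ almostPeriodFilter truncEDist f ↔ ReturnsAlong 𝓕 f := by
  rw [almostPeriodFilter, ← tendsto_iff_comap]
  refine ⟨fun h => .of_tendsto_zero_le fun ε hε => ?_,
    fun h => ENNReal.tendsto_nhds_zero.2 fun ε hε => ?_⟩
  · set c := min 1 ε
    have hc₀ : c ≠ 0 := (lt_min one_pos hε).ne'
    have hc : c ≠ ∞ := (min_lt_of_left_lt ENNReal.one_lt_top).ne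
    refine ⟨fun τ => c⁻¹ * weylDinf truncEDist 1 f fun t => f (t + τ),
      by simpa using ENNReal.Tendsto.const_mul h (.inr (ENNReal.inv_ne_top.2 hc₀)),
      Eventually.of_forall fun τ => ?_⟩
    beta_reduce
    rw [← ENNReal.div_eq_inv_mul, ENNReal.le_div_iff_mul_le (.inl hc₀) (.inl hc), mul_comm]
    refine le_trans ?_ (mul_kappaW_le_weylDinf hf (hf.comp_quasiMeasurePreserving
      (quasiMeasurePreserving_add_right volume τ)) (min_le_left 1 ε))
    refine mul_le_mul_right (kappaW_mono ?_) c
    exact fun t ht => (min_le_right 1 ε).trans (ht.trans_eq (edist_comm _ _))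
  · set c := min 1 (ε / 2)
    have hε₂ : 0 < ε / 2 := ENNReal.half_pos hε.ne'
    filter_upwards [ENNReal.tendsto_nhds_zero.1 (h c (lt_min one_pos hε₂)) _ hε₂] with τ hτ
    simp only [edist_comm (f (_ + τ))] at hτ
    exact (weylDinf_le_add_kappaW f _ (min_le_left _ _)).trans
      ((add_le_add (min_le_right _ _) hτ).trans_eq (ENNReal.add_halves ε))

theorem almostPeriodFilter_sub_self_le {f : ℝ → X} (hf : AEStronglyMeasurable f volume) :
    almostPeriodFilter truncEDist f - almostPeriodFilter truncEDist f
      ≤ almostPeriodFilter truncEDist f := by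
  have hret := (le_almostPeriodFilter_iff hf).1 le_rfl
  exact (le_almostPeriodFilter_iff hf).2 (hret.filter_sub hret)

theorem tendsto_phase_iff {ω : ℝ} {l : Filter ℝ} :
    Tendsto (phase ω) l (𝓝 0) ↔
      Tendsto (fun τ => Complex.exp (Complex.I * ((ω * τ : ℝ) : ℂ))) l (𝓝 1) := by
  have hcoe (τ : ℝ) : Complex.exp (Complex.I * ((ω * τ : ℝ) : ℂ)) =
      (AddCircle.homeomorphCircle' (phase ω τ) : ℂ) := by
    rw [phase_apply, AddCircle.homeomorphCircle'_apply_mk, Circle.coe_exp, mul_comm]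
  have hone : (1 : ℂ) = (AddCircle.homeomorphCircle' 0 : ℂ) := by
    rw [← AddCircle.coe_zero, AddCircle.homeomorphCircle'_apply_mk, Circle.exp_zero,
      Circle.coe_one]
  have hcircle : IsInducing fun x : AddCircle (2 * Real.pi) =>
      (AddCircle.homeomorphCircle' x : ℂ) :=
    IsInducing.subtypeVal.comp AddCircle.homeomorphCircle'.isInducing
  simp only [hcoe]
  rw [hone, hcircle.tendsto_nhds_iff]
  rfl

theorem mem_WMod_iff {α : Type*} {d : α → α → ℝ} {f : ℝ → α} {ω : ℝ} :
    ω ∈ WMod d f ↔ Tendsto (phase ω) (almostPeriodFilter d f) (𝓝 0) := by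
  rw [tendsto_phase_iff, almostPeriodFilter, tendsto_iff_seq_tendsto]
  simp only [tendsto_comap_iff]
  rfl

theorem MemWpTilde.weylAPAlong {x₀ : X} {f : ℝ → X} (hf : MemWpTilde truncEDist 1 x₀ f)
    (h𝓕 : 𝓕 ≤ almostPeriodFilter truncEDist f) : WeylAPAlong 𝓕 f where
  aestronglyMeasurable := hf.1.1
  returnsAlong := (le_almostPeriodFilter_iff hf.1.1).1 h𝓕
  weylTotallyBounded ε hε η hη := by
    set c := min 1 (ε / 2)
    have hε₂ : 0 < ε / 2 := ENNReal.half_pos hε.ne'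
    have hc : c ≠ ∞ := (min_lt_of_left_lt ENNReal.one_lt_top).ne
    have hη' : min 1 η ≠ ∞ := (min_lt_of_left_lt ENNReal.one_lt_top).ne
    obtain ⟨K, hK, hKf⟩ := hf.2.2 c.toReal (ENNReal.toReal_pos (lt_min one_pos hε₂).ne' hc)
      (min 1 η).toReal (ENNReal.toReal_pos (lt_min one_pos hη).ne' hη')
    rw [ENNReal.ofReal_toReal hc, ENNReal.ofReal_toReal hη'] at hKf
    obtain ⟨s, hs, hKs⟩ := EMetric.totallyBounded_iff.1 hK.totallyBounded _ hε₂
    refine ⟨s, hs, (kappaW_mono ?_).trans (hKf.le.trans (min_le_right _ _))⟩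
    intro t ht
    rw [Set.mem_ofPred_eq, dInfDist]
    refine le_iInf₂ fun y hy => ?_
    obtain ⟨x, hxs, hxy⟩ := Set.mem_iUnion₂.1 (hKs hy)
    rw [ofReal_truncEDist]
    refine min_le_min_left 1 (not_lt.1 fun hty => ?_)
    have := (edist_triangle (f t) y x).trans_lt (ENNReal.add_lt_add hty hxy)
    exact (ht x hxs).not_gt (this.trans_eq (ENNReal.add_halves ε))

theorem WeylAPAlong.memWpTilde {f : ℝ → X} (hf : WeylAPAlong 𝓕 f)
    (hrel : ∀ s ∈ 𝓕, RelDense s) (x₀ : X) : MemWpTilde truncEDist 1 x₀ f := by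
  refine ⟨⟨hf.aestronglyMeasurable, 1, fun ξ => ?_⟩, fun ε hε => hrel _ ?_, fun ε hε δ hδ => ?_⟩
  · calc ∫⁻ t in Set.Icc ξ (ξ + 1), ENNReal.ofReal (truncEDist (f t) x₀ ^ (1 : ℝ))
        ≤ ∫⁻ _ in Set.Icc ξ (ξ + 1), 1 :=
          lintegral_mono fun t => by simp [ofReal_truncEDist]
      _ = ENNReal.ofReal 1 := by simp
  · exact (le_almostPeriodFilter_iff hf.aestronglyMeasurable).2 hf.returnsAlong
      ((hasBasis_almostPeriodFilter truncEDist f).mem_of_mem hε)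
  · obtain ⟨s, hs, hsf⟩ := hf.weylTotallyBounded _ (ENNReal.ofReal_pos.2 hε) _
      (ENNReal.ofReal_pos.2 (half_pos hδ))
    refine ⟨s, hs.isCompact, lt_of_le_of_lt ((kappaW_mono ?_).trans hsf)
      ((ENNReal.ofReal_lt_ofReal_iff hδ).2 (half_lt_self hδ))⟩
    intro t ht x hx
    exact (ht.trans (iInf₂_le x hx)).trans (ofReal_truncEDist (f t) x ▸ min_le_right _ _)

end AlmostPeriodFilter

section FrequencyFilter

theorem RelDense.mono {s t : Set ℝ} (hs : RelDense s) (h : s ⊆ t) : RelDense t :=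
  let ⟨a, ha, hsa⟩ := hs
  ⟨a, ha, fun ξ => (hsa ξ).mono (Set.inter_subset_inter_right _ h)⟩

-- Cover `θ '' v` by finitely many small translates: elements of `v` differ from one of finitely
-- many members of `v` by a common return of `u` and `θ`.
theorem relDense_of_mem_inf_comap_nhds_zero {G : Type*} [AddCommGroup G] [UniformSpace G]
    [IsUniformAddGroup G] [CompactSpace G] (θ : ℝ →+ G) {𝓖 : Filter ℝ}
    (hrel : ∀ s ∈ 𝓖, RelDense s) (hsub : 𝓖 - 𝓖 ≤ 𝓖) {s : Set ℝ} (hs : s ∈ 𝓖 ⊓ comap θ (𝓝 0)) :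
    RelDense s := by
  obtain ⟨u, hu, u', ⟨V, hV, hVu'⟩, rfl⟩ := hs
  obtain ⟨v₁, hv₁, v₂, hv₂, hvu⟩ := Filter.mem_sub.1 (hsub hu)
  have hVunif : {p : G × G | p.1 - p.2 ∈ V} ∈ uniformity G := by
    rw [uniformity_eq_comap_nhds_zero_swapped]
    exact preimage_mem_comap hV
  obtain ⟨σ, hσv, hσ, hcover⟩ := Set.exists_subset_image_finite_and.1
    (totallyBounded_iff_subset.1 (isCompact_univ.totallyBounded.subset
      (Set.subset_univ (θ '' (v₁ ∩ v₂)))) _ hVunif)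
  obtain ⟨M, hM, hσM⟩ := hσ.isBounded.exists_pos_norm_le
  obtain ⟨a, ha, hva⟩ := hrel _ (inter_mem hv₁ hv₂)
  refine ⟨2 * M + a, by positivity, fun ξ => ?_⟩
  obtain ⟨t, ht, htv⟩ := hva (ξ + M)
  obtain ⟨_, ⟨b, hb, rfl⟩, htb⟩ := Set.mem_iUnion₂.1 (hcover (Set.mem_image_of_mem θ htv))
  have hbM := abs_le.1 (hσM b hb)
  refine ⟨t - b, ⟨by linarith [ht.1], by linarith [ht.2]⟩,
    hvu (Set.sub_mem_sub htv.1 (hσv hb).2), hVu' ?_⟩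
  rwa [Set.mem_preimage, map_sub]

/-- The filter on `ℝ` of simultaneous returns of all frequencies in `Λ`: it is generated by the
sets of translations `τ` for which finitely many `ω * τ`, with `ω ∈ Λ`, are close to `2πℤ`. -/
noncomputable def frequencyFilter (Λ : Set ℝ) : Filter ℝ :=
  comap (fun τ (ω : Λ) => phase ω τ) (𝓝 0)

theorem le_frequencyFilter_iff {Λ : Set ℝ} {l : Filter ℝ} :
    l ≤ frequencyFilter Λ ↔ ∀ ω ∈ Λ, Tendsto (phase ω) l (𝓝 0) := by
  rw [frequencyFilter, ← tendsto_iff_comap, tendsto_pi_nhds]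
  exact Subtype.forall

theorem almostPeriodFilter_le_frequencyFilter {α : Type*} (d : α → α → ℝ) (f : ℝ → α) :
    almostPeriodFilter d f ≤ frequencyFilter (WMod d f) :=
  le_frequencyFilter_iff.2 fun _ => mem_WMod_iff.1

theorem isReturnFilter_inf_frequencyFilter {𝓖 : Filter ℝ} (hrel : ∀ s ∈ 𝓖, RelDense s)
    (hsub : 𝓖 - 𝓖 ≤ 𝓖) {Λ : Set ℝ} (hΛ : Dense Λ) : IsReturnFilter (𝓖 ⊓ frequencyFilter Λ) where
  relDense _ := by
    have : Fact (0 < 2 * Real.pi) := ⟨Real.two_pi_pos⟩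
    exact relDense_of_mem_inf_comap_nhds_zero (AddMonoidHom.pi fun ω : Λ => phase ω) hrel hsub
  exists_small_frequency c hc :=
    let ⟨ω, hω, hωc⟩ := hΛ.exists_between hc
    ⟨ω, hωc, le_frequencyFilter_iff.1 inf_le_right ω hω⟩

end FrequencyFilter

theorem weyl_tilde_selection_general {U V : Type*} [MetricSpace U] [PseudoMetricSpace V] (x₀ : U)
    (g : ℝ → U) (hg : MemWpTilde bdist 1 x₀ g)
    (F : ℝ → Closeds U) (hFne : ∀ t : ℝ, (F t : Set U).Nonempty)
    (hFc : ∀ t : ℝ, IsComplete (F t : Set U))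
    (hF : MemWpTilde clDist 1 (⟨{x₀}, isClosed_singleton⟩ : Closeds U) F)
    (hT : ∀ ε > (0 : ℝ), RelDense (APeriods bdist 1 ε g ∩ APeriods clDist 1 ε F))
    (δ : ℝ) (hδ : 0 < δ) (h : ℝ → V) (hhdense : Dense (WMod bdist h)) :
    ∃ f : ℝ → U, MemWpTilde bdist 1 x₀ f ∧
      (∀ᵐ t ∂(volume : Measure ℝ), f t ∈ (F t : Set U)) ∧
      (∀ᵐ t ∂(volume : Measure ℝ),
        dist (f t) (g t) < Metric.infDist (g t) (F t) + δ) ∧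
      (∀ ε' > (0 : ℝ), ∃ ε > (0 : ℝ),
        (APeriods bdist 1 ε g ∩ APeriods clDist 1 ε F) ∩ APeriods bdist 1 ε h ⊆
          APeriods bdist 1 ε' f) := by
  simp only [bdist_eq_truncEDist (α := U), clDist_eq_truncEDist] at hg hF hT ⊢
  set 𝓖 := almostPeriodFilter truncEDist g ⊓ almostPeriodFilter truncEDist F
  have h𝓖 : 𝓖.HasBasis (0 < ·) fun ε => APeriods truncEDist 1 ε g ∩ APeriods truncEDist 1 ε F :=
    hasBasis_inf_of_monotone (hasBasis_almostPeriodFilter _ g) (hasBasis_almostPeriodFilter _ F)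
      (monotone_aPeriods _ g) (monotone_aPeriods _ F)
  have hrel (s) (hs : s ∈ 𝓖) : RelDense s :=
    let ⟨ε, hε, hεs⟩ := h𝓖.mem_iff.1 hs
    (hT ε hε).mono hεs
  have hsub : 𝓖 - 𝓖 ≤ 𝓖 := le_inf
    ((Filter.sub_le_sub inf_le_left inf_le_left).trans (almostPeriodFilter_sub_self_le hg.1.1))
    ((Filter.sub_le_sub inf_le_right inf_le_right).trans (almostPeriodFilter_sub_self_le hF.1.1))
  have h𝓕 := isReturnFilter_inf_frequencyFilter hrel hsub hhdense
  obtain ⟨f, hf, hfF⟩ := h𝓕.exists_weylAPAlong_selection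
    (hF.weylAPAlong (inf_le_left.trans inf_le_right)) hFne hFc
    (hg.weylAPAlong (inf_le_left.trans inf_le_left)) hδ
  refine ⟨f, hf.memWpTilde h𝓕.relDense x₀, hfF.mono fun t ht => ht.1, hfF.mono fun t ht => ht.2,
    fun ε' hε' => ?_⟩
  have hfh : 𝓖 ⊓ almostPeriodFilter bdist h ≤ almostPeriodFilter truncEDist f :=
    (inf_le_inf_left 𝓖 (almostPeriodFilter_le_frequencyFilter bdist h)).trans
      ((le_almostPeriodFilter_iff hf.aestronglyMeasurable).2 hf.returnsAlong)
  exact (hasBasis_inf_of_monotone h𝓖 (hasBasis_almostPeriodFilter bdist h)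
    ((monotone_aPeriods _ g).inter (monotone_aPeriods _ F)) (monotone_aPeriods _ h)).mem_iff.1
    (hfh ((hasBasis_almostPeriodFilter _ f).mem_of_mem hε'))

open TopologicalSpace in
/-- **Theorem 3 (selection theorem for `W̃(ℝ,U)`).**
Let `(U,ρ)` be a complete metric space, `g ∈ W̃(ℝ,U)`,
`F ∈ W̃₁(ℝ, (cl U, dist_{ρ'}))`, and suppose that
`𝒯(ε) = P^{(ρ')}₁(ε; g) ∩ P^{(dist_{ρ'})}₁(ε; F)` is relatively dense for every `ε > 0`.
Then for every `δ > 0` and every `h ∈ W₁(ℝ,ℝ)` with dense countable frequency module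
there is `f_δ ∈ W̃(ℝ,U)` with `f_δ(t) ∈ F(t)` a.e.,
`ρ(f_δ(t), g(t)) < ρ(g(t), F(t)) + δ` a.e., and such that for every `ε' > 0` there is
`ε > 0` with `P^{(ρ')}₁(ε'; f_δ) ⊇ 𝒯(ε) ∩ P^{(ρ_ℝ)}₁(ε; h)`. -/
theorem weyl_tilde_selection {U : Type*} [MetricSpace U] [CompleteSpace U] (x₀ : U)
    (g : ℝ → U) (hg : MemWpTilde bdist 1 x₀ g)
    (F : ℝ → Closeds U) (hFne : ∀ t : ℝ, (F t : Set U).Nonempty)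
    (hF : MemWpTilde clDist 1 (⟨{x₀}, isClosed_singleton⟩ : Closeds U) F)
    (hT : ∀ ε > (0 : ℝ), RelDense (APeriods bdist 1 ε g ∩ APeriods clDist 1 ε F))
    (δ : ℝ) (hδ : 0 < δ)
    (h : ℝ → ℝ) (hh : MemWp dist 1 (0 : ℝ) h)
    (hhdense : Dense (WMod bdist h)) (hhcount : (WMod bdist h).Countable) :
    ∃ f : ℝ → U, MemWpTilde bdist 1 x₀ f ∧
      (∀ᵐ t ∂(volume : Measure ℝ), f t ∈ (F t : Set U)) ∧
      (∀ᵐ t ∂(volume : Measure ℝ),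
        dist (f t) (g t) < Metric.infDist (g t) (F t) + δ) ∧
      (∀ ε' > (0 : ℝ), ∃ ε > (0 : ℝ),
        (APeriods bdist 1 ε g ∩ APeriods clDist 1 ε F) ∩ APeriods bdist 1 ε h ⊆
          APeriods bdist 1 ε' f) :=
  weyl_tilde_selection_general x₀ g hg F hFne (fun t => (F t).isClosed.isComplete) hF hT δ hδ
    h hhdense
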